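/- arXiv:2412.15771 — 2 statements merged into one kernel-verified Lean document; each statement's English description precedes it below -/
import Mathlib

section
/- Let n ≥ 2 and let ω be a smooth (n−1)-form on an open set U ⊆ ℝⁿ with ω_x ≠ 0 at a point x ∈ U. Then ω has constant coefficients on a neighbourhood of x if and only if dω = 0 on a neighbourhood of x. -/
/-- Constant coefficients for a `p`-form (see context). -/
def HasConstantCoefficientsFormAt (n p : ℕ) (U : Set (Fin n → ℝ))
    (ω : (Fin n → ℝ) → ((Fin n → ℝ) [×p]→L[ℝ] ℝ)) (x : Fin n → ℝ) : Prop :=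
  ∃ V : Set (Fin n → ℝ), IsOpen V ∧ x ∈ V ∧ V ⊆ U ∧
    ∃ u : (Fin n → ℝ) → (Fin n → ℝ),
      ContDiffOn ℝ (⊤ : ℕ∞) u V ∧ Set.InjOn u V ∧ IsOpen (u '' V) ∧
      (∀ y ∈ V, Function.Bijective (fderiv ℝ u y)) ∧
      ∃ c : (Fin n → ℝ) [×p]→L[ℝ] ℝ,
        ∀ y ∈ V, ∀ v : Fin p → (Fin n → ℝ),
          ω y v = c (fun i => fderiv ℝ u y (v i))

section Helpers
set_option linter.unusedSectionVars false
open Set Filter Topology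

section Nemytskii
universe v
variable {K : Type} [TopologicalSpace K] [CompactSpace K]
variable {E : Type v} [NormedAddCommGroup E] [NormedSpace ℝ E]

/-- Pointwise application as a continuous bilinear map. -/
noncomputable def nemApply (K : Type) [TopologicalSpace K] [CompactSpace K]
    (E : Type v) [NormedAddCommGroup E] [NormedSpace ℝ E]
    (F : Type v) [NormedAddCommGroup F] [NormedSpace ℝ F] :
    C(K, E →L[ℝ] F) →L[ℝ] (C(K, E) →L[ℝ] C(K, F)) :=
  LinearMap.mkContinuous₂
    (LinearMap.mk₂ ℝ (fun (A : C(K, E →L[ℝ] F)) (g : C(K, E)) =>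
      (⟨fun t => A t (g t), A.continuous.clm_apply g.continuous⟩ : C(K, F)))
      (by intros; ext; simp) (by intros; ext; simp) (by intros; ext; simp)
      (by intros; ext; simp)) 1 (by
    intro A g
    rw [ContinuousMap.norm_le _ (by positivity)]
    intro t
    simp only [LinearMap.mk₂_apply, ContinuousMap.coe_mk, one_mul]
    exact ((A t).le_opNorm _).trans (by
      gcongr
      · exact A.norm_coe_le_norm t
      · exact g.norm_coe_le_norm t))

theorem nemApply_apply {F : Type v} [NormedAddCommGroup F] [NormedSpace ℝ F]
    (A : C(K, E →L[ℝ] F)) (g : C(K, E)) (t : K) : nemApply K E F A g t = A t (g t) := rfl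

/-- Composition operator. -/
def nem (K : Type) [TopologicalSpace K] {E : Type v} {F : Type v} [TopologicalSpace E]
    [TopologicalSpace F] (f : E → F) (hf : Continuous f) (g : C(K, E)) : C(K, F) :=
  ContinuousMap.comp ⟨f, hf⟩ g

theorem continuous_nem {F : Type v} [NormedAddCommGroup F] (f : E → F) (hf : Continuous f) :
    Continuous (nem K f hf) :=
  ContinuousMap.continuous_postcomp _

theorem hasFDerivAt_nem {F : Type v} [NormedAddCommGroup F] [NormedSpace ℝ F]
    (f : E → F) (hf : ContDiff ℝ 1 f) (g : C(K, E)) :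
    HasFDerivAt (nem K f hf.continuous)
      (nemApply K E F (nem K (fderiv ℝ f) (hf.continuous_fderiv one_ne_zero) g)) g := by
  rw [hasFDerivAt_iff_isLittleO, Asymptotics.isLittleO_iff]
  intro ε hε
  have hc := (continuous_nem (K := K) (fderiv ℝ f) (hf.continuous_fderiv one_ne_zero)).tendsto g
  rw [Metric.tendsto_nhds] at hc
  obtain ⟨δ, hδ, H⟩ := Metric.eventually_nhds_iff_ball.1 (hc ε hε)
  filter_upwards [Metric.ball_mem_nhds g hδ] with g' hg'
  rw [ContinuousMap.norm_le _ (by positivity)]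
  intro t
  have key : ∀ z ∈ Metric.ball (g t) δ, ‖fderiv ℝ f z - fderiv ℝ f (g t)‖ ≤ ε := by
    intro z hz
    have h1 : g + ContinuousMap.const K (z - g t) ∈ Metric.ball g δ := by
      rw [mem_ball_iff_norm, add_sub_cancel_left]
      refine lt_of_le_of_lt ((ContinuousMap.norm_le _ (norm_nonneg (z - g t))).2 ?_)
        (mem_ball_iff_norm.1 hz)
      intro s; simp
    have h2 := H _ h1
    rw [dist_eq_norm] at h2
    have h3 := (ContinuousMap.norm_coe_le_norm _ t).trans h2.le
    simpa [nem] using h3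
  have hgt : ‖g' t - g t‖ ≤ ‖g' - g‖ := ContinuousMap.norm_coe_le_norm (g' - g) t
  have := (convex_ball (g t) δ).norm_image_sub_le_of_norm_fderiv_le' (𝕜 := ℝ) (f := f)
    (φ := fderiv ℝ f (g t)) (C := ε)
    (fun z _ => hf.differentiable one_ne_zero z) key
    (Metric.mem_ball_self hδ) (y := g' t) (by
      rw [mem_ball_iff_norm]
      exact hgt.trans_lt (mem_ball_iff_norm.1 hg'))
  refine le_trans ?_ (this.trans (by gcongr))
  simp [nem, nemApply_apply]

theorem contDiff_nem_nat (k : ℕ) : ∀ {F : Type v} [NormedAddCommGroup F] [NormedSpace ℝ F]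
    (f : E → F) (hf : ContDiff ℝ k f), ContDiff ℝ k (nem K f hf.continuous) := by
  induction k with
  | zero => intro F _ _ f hf; exact contDiff_zero.2 (continuous_nem f _)
  | succ k ih =>
    intro F _ _ f hf
    have hf1 : ContDiff ℝ 1 f := hf.of_le (by norm_cast; omega)
    have hd := fun g => hasFDerivAt_nem (K := K) f hf1 g
    have hf' : ContDiff ℝ k (fderiv ℝ f) := hf.fderiv_right (by norm_cast)
    have h := ih (fderiv ℝ f) hf'
    push_cast
    rw [contDiff_succ_iff_fderiv]
    refine ⟨fun g => (hd g).differentiableAt, by simp, ?_⟩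
    rw [show fderiv ℝ (nem K f hf.continuous) = fun g => nemApply K E F
      (nem K (fderiv ℝ f) hf'.continuous g) from funext fun g => (hd g).fderiv]
    exact (nemApply K E F).contDiff.comp h

theorem contDiff_nem {F : Type v} [NormedAddCommGroup F] [NormedSpace ℝ F]
    (f : E → F) (hf : ContDiff ℝ (⊤ : ℕ∞) f) : ContDiff ℝ (⊤ : ℕ∞) (nem K f hf.continuous) :=
  contDiff_infty.2 fun k => contDiff_nem_nat k f (contDiff_infty.1 hf k)
end Nemytskii
section Flow
open scoped ContDiff

theorem ift_smooth {E F : Type*} [NormedAddCommGroup E] [NormedSpace ℝ E] [CompleteSpace E]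
    [NormedAddCommGroup F] [NormedSpace ℝ F] {f : E → F} {U : Set E} (hU : IsOpen U)
    (hf : ContDiffOn ℝ (⊤ : ℕ∞) f U) {x : E} (hx : x ∈ U) (f' : E ≃L[ℝ] F)
    (hf' : HasFDerivAt f (f' : E →L[ℝ] F) x) :
    ∃ e : OpenPartialHomeomorph E F, x ∈ e.source ∧ e.source ⊆ U ∧ (∀ y, e y = f y) ∧
      (∀ y ∈ e.source, ∃ A : E ≃L[ℝ] F, HasFDerivAt f (A : E →L[ℝ] F) y) ∧
      ContDiffOn ℝ (⊤ : ℕ∞) e.symm e.target := by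
  have hfx : ContDiffAt ℝ (⊤ : ℕ∞) f x := hf.contDiffAt (hU.mem_nhds hx)
  let e0 := hfx.toOpenPartialHomeomorph f hf' (by simp)
  let S : Set E := U ∩ fderiv ℝ f ⁻¹' (range ((↑) : (E ≃L[ℝ] F) → (E →L[ℝ] F)))
  have hS : IsOpen S :=
    (hf.continuousOn_fderiv_of_isOpen hU (by simp)).isOpen_inter_preimage hU
      ContinuousLinearEquiv.isOpen
  have hxS : x ∈ S := ⟨hx, f', hf'.fderiv.symm⟩
  have hdiff : ∀ y ∈ U, DifferentiableAt ℝ f y := fun y hy =>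
    (hf.contDiffAt (hU.mem_nhds hy)).differentiableAt (by simp)
  have hA : ∀ y ∈ S, ∃ A : E ≃L[ℝ] F, HasFDerivAt f (A : E →L[ℝ] F) y := by
    rintro y ⟨hy, A, hA⟩
    exact ⟨A, by rw [hA]; exact (hdiff y hy).hasFDerivAt⟩
  let e := e0.restrOpen S hS
  have hsrc : e.source = e0.source ∩ S := e0.restrOpen_source S hS
  have hee : ∀ y, e y = f y := fun y => rfl
  refine ⟨e, ?_, ?_, hee, ?_, ?_⟩
  · rw [hsrc]; exact ⟨hfx.mem_toOpenPartialHomeomorph_source hf' (by simp), hxS⟩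
  · rw [hsrc]; exact fun y hy => hy.2.1
  · rw [hsrc]; exact fun y hy => hA y hy.2
  · intro z hz
    have hm := e.map_target hz
    rw [hsrc] at hm
    obtain ⟨A, hA⟩ := hA _ hm.2
    exact (e.contDiffAt_symm hz hA (hf.contDiffAt (hU.mem_nhds hm.2.1))).contDiffWithinAt

variable {E : Type} [NormedAddCommGroup E] [NormedSpace ℝ E] [CompleteSpace E]

/-- Constants. -/
noncomputable def flowConst (E : Type) [NormedAddCommGroup E] [NormedSpace ℝ E] :
    E →L[ℝ] C(Icc (0:ℝ) 1, E) :=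
  LinearMap.mkContinuous
    { toFun := fun x => ContinuousMap.const _ x
      map_add' := by intros; ext; simp
      map_smul' := by intros; ext; simp } 1 (by
    intro x
    rw [ContinuousMap.norm_le _ (by positivity)]
    intro t; simp)

theorem flowConst_apply (x : E) (t) : flowConst E x t = x := rfl

/-- Primitive. -/
noncomputable def flowVol (E : Type) [NormedAddCommGroup E] [NormedSpace ℝ E] :
    C(Icc (0:ℝ) 1, E) →L[ℝ] C(Icc (0:ℝ) 1, E) :=
  LinearMap.mkContinuous
    { toFun := fun g => ⟨fun t => ∫ τ in (0:ℝ)..t, g (projIcc 0 1 zero_le_one τ), by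
        have h := intervalIntegral.continuous_primitive (μ := MeasureTheory.volume)
          (f := fun τ => g (projIcc 0 1 zero_le_one τ))
          (fun a b => (g.continuous.comp continuous_projIcc).intervalIntegrable a b) 0
        exact h.comp continuous_subtype_val⟩
      map_add' := by
        intro g h; ext t
        simp only [ContinuousMap.coe_mk, ContinuousMap.add_apply]
        exact intervalIntegral.integral_add
          ((g.continuous.comp continuous_projIcc).intervalIntegrable _ _)
          ((h.continuous.comp continuous_projIcc).intervalIntegrable _ _)
      map_smul' := by
        intro c g; ext t
        simp } 1 (by
    intro g
    rw [ContinuousMap.norm_le _ (by positivity)]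
    intro t
    have := intervalIntegral.norm_integral_le_of_norm_le_const (a := 0) (b := (t:ℝ)) (C := ‖g‖)
      (f := fun τ => g (projIcc 0 1 zero_le_one τ)) (fun τ _ => g.norm_coe_le_norm _)
    refine this.trans ?_
    have h0 := t.2.1
    have h1 := t.2.2
    rw [sub_zero, abs_of_nonneg h0]
    nlinarith [norm_nonneg g])

theorem flowVol_apply (g : C(Icc (0:ℝ) 1, E)) (t : Icc (0:ℝ) 1) :
    flowVol E g t = ∫ τ in (0:ℝ)..t, g (projIcc 0 1 zero_le_one τ) := rfl

/-- Rescaling. -/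
def flowScale (a : Icc (0:ℝ) 1) (g : C(Icc (0:ℝ) 1, E)) : C(Icc (0:ℝ) 1, E) :=
  g.comp ⟨fun t => ⟨a * t, mul_nonneg a.2.1 t.2.1, mul_le_one₀ a.2.2 t.2.1 t.2.2⟩, by fun_prop⟩

theorem flowVol_scale (a : Icc (0:ℝ) 1) (g : C(Icc (0:ℝ) 1, E)) :
    flowScale a (flowVol E g) = (a : ℝ) • flowVol E (flowScale a g) := by
  ext t
  rw [ContinuousMap.smul_apply, flowVol_apply]
  change (∫ τ in (0:ℝ)..((a:ℝ) * t), g (projIcc 0 1 zero_le_one τ)) = _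
  have h := intervalIntegral.smul_integral_comp_mul_left (a := 0) (b := (t:ℝ))
    (fun τ => g (projIcc 0 1 zero_le_one τ)) (a : ℝ)
  rw [mul_zero] at h
  rw [← h]
  congr 1
  apply intervalIntegral.integral_congr
  intro τ hτ
  rw [uIcc_of_le t.2.1] at hτ
  have hτ' : τ ∈ Icc (0:ℝ) 1 := ⟨hτ.1, hτ.2.trans t.2.2⟩
  have hτa : (a:ℝ) * τ ∈ Icc (0:ℝ) 1 := ⟨mul_nonneg a.2.1 hτ.1, mul_le_one₀ a.2.2 hτ'.1 hτ'.2⟩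
  simp only [projIcc_of_mem _ hτ', projIcc_of_mem _ hτa]
  rfl

theorem exists_smooth_flow (X : E → E) (hX : ContDiff ℝ (⊤ : ℕ∞) X) (x₀ : E) :
    ∃ (F : ℝ × E → E) (O : Set (ℝ × E)), IsOpen O ∧ (0, x₀) ∈ O ∧ ContDiffOn ℝ (⊤ : ℕ∞) F O ∧
      (∀ x, (0, x) ∈ O → F (0, x) = x) ∧ ∀ p ∈ O, fderiv ℝ F p (1, 0) = X (F p) := by
  let N := nem (Icc (0:ℝ) 1) X hX.continuous
  have hN : ContDiff ℝ (⊤ : ℕ∞) N := contDiff_nem X hX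
  let Φ : ℝ × E × C(Icc (0:ℝ) 1, E) → ℝ × E × C(Icc (0:ℝ) 1, E) := fun p =>
    (p.1, p.2.1, p.2.2 - flowConst E p.2.1 - p.1 • flowVol E (N p.2.2))
  have hΦ : ContDiff ℝ (⊤ : ℕ∞) Φ := by
    have h1 : ContDiff ℝ (⊤ : ℕ∞) fun p : ℝ × E × C(Icc (0:ℝ) 1, E) => flowVol E (N p.2.2) :=
      (flowVol E).contDiff.comp (hN.comp (contDiff_snd.comp contDiff_snd))
    have h2 : ContDiff ℝ (⊤ : ℕ∞) fun p : ℝ × E × C(Icc (0:ℝ) 1, E) => flowConst E p.2.1 :=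
      (flowConst E).contDiff.comp (contDiff_fst.comp contDiff_snd)
    exact contDiff_fst.prodMk ((contDiff_fst.comp contDiff_snd).prodMk
      (((contDiff_snd.comp contDiff_snd).sub h2).sub (contDiff_fst.smul h1)))
  let γ₀ := flowConst E x₀
  let p₀ : ℝ × E × C(Icc (0:ℝ) 1, E) := (0, x₀, γ₀)
  let V₀ := flowVol E (N γ₀)
  let fs := ContinuousLinearMap.fst ℝ ℝ (E × C(Icc (0:ℝ) 1, E))
  let sn := ContinuousLinearMap.snd ℝ ℝ (E × C(Icc (0:ℝ) 1, E))
  let A := fs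
  let B := (ContinuousLinearMap.fst ℝ E C(Icc (0:ℝ) 1, E)).comp sn
  let C := (ContinuousLinearMap.snd ℝ E C(Icc (0:ℝ) 1, E)).comp sn
  let f1 := A.prod (B.prod (C - (flowConst E).comp B - A.smulRight V₀))
  let f2 := A.prod (B.prod (C + (flowConst E).comp B + A.smulRight V₀))
  let f' : (ℝ × E × C(Icc (0:ℝ) 1, E)) ≃L[ℝ] (ℝ × E × C(Icc (0:ℝ) 1, E)) :=
    ContinuousLinearEquiv.equivOfInverse f1 f2
      (by rintro ⟨a, b, c⟩; simp [f1, f2, A, B, C, fs, sn]; try abel)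
      (by rintro ⟨a, b, c⟩; simp [f1, f2, A, B, C, fs, sn]; try abel)
  have hf' : HasFDerivAt Φ (f' : (ℝ × E × C(Icc (0:ℝ) 1, E)) →L[ℝ] (ℝ × E × C(Icc (0:ℝ) 1, E))) p₀ := by
    have hV : DifferentiableAt ℝ (fun p : ℝ × E × C(Icc (0:ℝ) 1, E) => flowVol E (N p.2.2)) p₀ :=
      ((flowVol E).contDiff.comp (hN.comp (contDiff_snd.comp contDiff_snd))).contDiffAt.differentiableAt
        (n := (⊤ : ℕ∞)) (by simp)
    have h3 : HasFDerivAt (fun p : ℝ × E × C(Icc (0:ℝ) 1, E) => p.1 • flowVol E (N p.2.2))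
        (A.smulRight V₀) p₀ := by
      have := A.hasFDerivAt (x := p₀) |>.smul hV.hasFDerivAt
      have h0 : A p₀ = 0 := rfl
      rw [h0, zero_smul, zero_add] at this
      exact this
    exact A.hasFDerivAt.prodMk (B.hasFDerivAt.prodMk
      ((C.hasFDerivAt.sub ((flowConst E).comp B).hasFDerivAt).sub h3))
  obtain ⟨e, he0, -, hee, -, hes⟩ := ift_smooth isOpen_univ hΦ.contDiffOn (mem_univ p₀) f' hf'
  let j : ℝ × E → ℝ × E × C(Icc (0:ℝ) 1, E) := fun q => (q.1, q.2, 0)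
  have hj : ContDiff ℝ (⊤ : ℕ∞) j := contDiff_fst.prodMk (contDiff_snd.prodMk contDiff_const)
  let Γ : ℝ × E → C(Icc (0:ℝ) 1, E) := fun q => (e.symm (j q)).2.2
  let O₀ := j ⁻¹' e.target
  have hO₀ : IsOpen O₀ := e.open_target.preimage hj.continuous
  have hsj : ContDiffOn ℝ (⊤ : ℕ∞) (fun q => e.symm (j q)) O₀ :=
    hes.comp hj.contDiffOn (fun q hq => hq)
  obtain ⟨r, hr, hball⟩ := Metric.isOpen_iff.1 e.open_source p₀ he0
  let O := O₀ ∩ (fun q => e.symm (j q)) ⁻¹' Metric.ball p₀ r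
  have hO : IsOpen O := hsj.continuousOn.isOpen_inter_preimage hO₀ Metric.isOpen_ball
  have hΦp₀ : Φ p₀ = j (0, x₀) := by simp [Φ, p₀, j, γ₀]
  have hj0 : j (0, x₀) ∈ e.target := by
    rw [← hΦp₀, ← hee]; exact e.map_source he0
  have hsymm0 : e.symm (j (0, x₀)) = p₀ := by
    rw [← hΦp₀, ← hee]; exact e.left_inv he0
  have hsol : ∀ q ∈ O₀, e.symm (j q) = (q.1, q.2, Γ q) ∧
      Γ q = flowConst E q.2 + q.1 • flowVol E (N (Γ q)) := by
    intro q hq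
    have h := e.right_inv hq
    rw [hee] at h
    simp only [Φ, j, Prod.mk.injEq] at h
    obtain ⟨h1, h2, h3⟩ := h
    have h4 : e.symm (j q) = (q.1, q.2, Γ q) := Prod.ext h1 (Prod.ext h2 rfl)
    refine ⟨h4, ?_⟩
    rw [sub_sub, sub_eq_zero] at h3
    change Γ q = _ at h3
    rw [h4] at h3
    exact h3
  let one : Icc (0:ℝ) 1 := ⟨1, by simp⟩
  let F : ℝ × E → E := fun q => Γ q one
  have hΓ : ContDiffOn ℝ (⊤ : ℕ∞) Γ O₀ := (contDiff_snd.comp contDiff_snd).comp_contDiffOn hsj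
  have hF : ContDiffOn ℝ (⊤ : ℕ∞) F O₀ :=
    (ContinuousMap.evalCLM ℝ one : C(Icc (0:ℝ) 1, E) →L[ℝ] E).contDiff.comp_contDiffOn hΓ
  have hOO : O ⊆ O₀ := inter_subset_left
  -- rescaling
  have hscale : ∀ q ∈ O, ∀ a : Icc (0:ℝ) 1, F (a * q.1, q.2) = Γ q a := by
    intro q hq a
    obtain ⟨h1, h2⟩ := hsol q (hOO hq)
    let pa : ℝ × E × C(Icc (0:ℝ) 1, E) := (a * q.1, q.2, flowScale a (Γ q))
    have hqb : (q.1, q.2, Γ q) ∈ Metric.ball p₀ r := h1 ▸ hq.2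
    have hpab : pa ∈ Metric.ball p₀ r := by
      rw [Metric.mem_ball, Prod.dist_eq, Prod.dist_eq] at hqb ⊢
      refine lt_of_le_of_lt ?_ hqb
      refine max_le_max ?_ (max_le_max le_rfl ?_)
      · simp only [pa, p₀, dist_zero_right, norm_mul]
        rw [Real.norm_of_nonneg a.2.1]
        exact mul_le_of_le_one_left (norm_nonneg _) a.2.2
      · refine (ContinuousMap.dist_le dist_nonneg).2 fun t => ?_
        exact ContinuousMap.dist_apply_le_dist (f := Γ q) (g := γ₀) _
    have hpas := hball hpab
    have hΦpa : Φ pa = j (a * q.1, q.2) := by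
      have h3 : flowScale a (Γ q) = flowConst E q.2 + (q.1 * a) • flowVol E (N (flowScale a (Γ q))) := by
        conv_lhs => rw [h2]
        have : flowScale a (flowConst E q.2 + q.1 • flowVol E (N (Γ q))) =
          flowConst E q.2 + q.1 • flowScale a (flowVol E (N (Γ q))) := rfl
        rw [this, flowVol_scale, smul_smul]
        rfl
      simp only [Φ, pa, j, Prod.mk.injEq, true_and]
      rw [sub_sub, sub_eq_zero, mul_comm (a : ℝ)]
      exact h3
    have h4 : e.symm (j (a * q.1, q.2)) = pa := by
      rw [← hΦpa, ← hee]; exact e.left_inv hpas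
    change (e.symm (j (a * q.1, q.2))).2.2 one = _
    rw [h4]
    change Γ q ⟨a * 1, _⟩ = _
    congr 1
    ext
    simp
  have hdF : ∀ q ∈ O, DifferentiableAt ℝ F q := fun q hq =>
    (hF.contDiffAt (hO₀.mem_nhds (hOO hq))).differentiableAt (by simp)
  have hode : ∀ q ∈ O, q.1 ≠ 0 → fderiv ℝ F q (1, 0) = X (F q) := by
    intro q hq hq0
    let g : ℝ → E := fun a => F (a * q.1, q.2)
    have hg1 : HasDerivAt g (q.1 • fderiv ℝ F q (1, 0)) 1 := by
      have hl : HasDerivAt (fun a : ℝ => (a * q.1, q.2)) (1 * q.1, (0 : E)) 1 :=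
        ((hasDerivAt_id (1:ℝ)).mul_const q.1).prodMk (hasDerivAt_const _ _)
      have hq1 : ((1:ℝ) * q.1, q.2) = q := by simp
      have hFq : HasFDerivAt F (fderiv ℝ F q) ((1:ℝ) * q.1, q.2) := by
        rw [hq1]; exact (hdF q hq).hasFDerivAt
      have := hFq.comp_hasDerivAt (1:ℝ) hl
      have h8 : fderiv ℝ F q (1 * q.1, 0) = q.1 • fderiv ℝ F q (1, 0) := by
        rw [← map_smul]; simp
      rw [h8] at this
      exact this
    have hc : Continuous fun τ => N (Γ q) (projIcc 0 1 zero_le_one τ) :=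
      (N (Γ q)).continuous.comp continuous_projIcc
    have hg2 : HasDerivAt (fun a : ℝ => q.2 + q.1 • ∫ τ in (0:ℝ)..a, N (Γ q) (projIcc 0 1 zero_le_one τ))
        (q.1 • X (F q)) 1 := by
      have := intervalIntegral.integral_hasDerivAt_right (hc.intervalIntegrable 0 1)
        (hc.stronglyMeasurableAtFilter _ _) hc.continuousAt
      have h5 := (this.const_smul q.1).const_add q.2
      rw [projIcc_right] at h5
      exact h5
    have hg3 : HasDerivWithinAt g (q.1 • X (F q)) (Icc 0 1) 1 := by
      refine hg2.hasDerivWithinAt.congr_of_mem ?_ (by simp)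
      intro a ha
      have h6 := hscale q hq ⟨a, ha⟩
      change F (a * q.1, q.2) = _
      rw [h6]
      conv_lhs => rw [(hsol q (hOO hq)).2]
      rfl
    have hu : UniqueDiffWithinAt ℝ (Icc (0:ℝ) 1) 1 :=
      (uniqueDiffOn_Icc zero_lt_one) 1 (by simp)
    have := hu.eq_deriv _ hg1.hasDerivWithinAt hg3
    exact smul_right_injective E hq0 this
  refine ⟨F, O, hO, ⟨hj0, ?_⟩, hF.mono hOO, ?_, ?_⟩
  · rw [mem_preimage, hsymm0]; exact Metric.mem_ball_self hr
  · intro x hx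
    have := (hsol _ (hOO hx)).2
    change Γ (0, x) one = x
    rw [this, zero_smul, add_zero]; rfl
  · intro q hq
    by_cases hq0 : q.1 = 0
    · have hl : Tendsto (fun s : ℝ => (s, q.2)) (𝓝[≠] 0) (𝓝 q) := by
        have : ContinuousAt (fun s : ℝ => (s, q.2)) 0 := by fun_prop
        have h7 := this.tendsto
        rw [show ((0:ℝ), q.2) = q from Prod.ext hq0.symm rfl] at h7
        exact h7.mono_left nhdsWithin_le_nhds
      have hc1 : ContinuousAt (fun p => fderiv ℝ F p (1, 0)) q := by
        have := (hF.continuousOn_fderiv_of_isOpen hO₀ (by simp)).continuousAt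
          (hO₀.mem_nhds (hOO hq))
        exact this.clm_apply continuousAt_const
      have hc2 : ContinuousAt (fun p => X (F p)) q :=
        hX.continuous.continuousAt.comp (hdF q hq).continuousAt
      refine tendsto_nhds_unique_of_eventuallyEq (hc1.tendsto.comp hl) (hc2.tendsto.comp hl) ?_
      filter_upwards [hl.eventually (hO.mem_nhds hq), self_mem_nhdsWithin] with s hs hs0
      exact hode _ hs hs0
    · exact hode q hq hq0
end Flow
section AltLift
variable {E : Type} [NormedAddCommGroup E] [NormedSpace ℝ E] {m : ℕ}

/-- Normalised alternatization as a continuous linear map. -/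
noncomputable def altCLM (E : Type) [NormedAddCommGroup E] [NormedSpace ℝ E] (m : ℕ) :
    (E [×m]→L[ℝ] ℝ) →L[ℝ] (E [⋀^Fin m]→L[ℝ] ℝ) :=
  LinearMap.mkContinuous
    { toFun := fun f => ((m.factorial : ℝ)⁻¹) • ContinuousMultilinearMap.alternatization f
      map_add' := by intro f g; rw [map_add, smul_add]
      map_smul' := by
        intro c f
        ext v
        simp [ContinuousMultilinearMap.alternatization_apply_apply, Finset.mul_sum]
        refine Finset.sum_congr rfl fun σ _ => ?_
        rcases Int.units_eq_one_or (Equiv.Perm.sign σ) with h | h <;> simp [h] <;> ring } 1 (by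
    intro f
    refine ContinuousAlternatingMap.opNorm_le_bound _ (by positivity) fun v => ?_
    have hm : (0:ℝ) < m.factorial := by exact_mod_cast m.factorial_pos
    simp only [LinearMap.coe_mk, AddHom.coe_mk, ContinuousAlternatingMap.smul_apply,
      ContinuousMultilinearMap.alternatization_apply_apply, norm_smul, norm_inv, RCLike.norm_natCast]
    rw [inv_mul_le_iff₀ hm]
    refine (norm_sum_le _ _).trans ?_
    refine (Finset.sum_le_card_nsmul _ _ (‖f‖ * ∏ i, ‖v i‖) ?_).trans ?_
    · intro σ _
      have h1 : ‖Equiv.Perm.sign σ • f (v ∘ σ)‖ = ‖f (v ∘ σ)‖ := by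
        rcases Int.units_eq_one_or (Equiv.Perm.sign σ) with h | h <;> simp [h]
      rw [h1]
      refine (f.le_opNorm _).trans_eq ?_
      congr 1
      exact Equiv.prod_comp σ (fun i => ‖v i‖)
    · simp [Finset.card_univ, Fintype.card_perm])

theorem altCLM_apply_of_alt (f : E [×m]→L[ℝ] ℝ)
    (h : ∀ v : Fin m → E, ∀ i j, i ≠ j → v i = v j → f v = 0) (v : Fin m → E) :
    altCLM E m f v = f v := by
  let g : E [⋀^Fin m]→ₗ[ℝ] ℝ :=
    { f.toMultilinearMap with
      map_eq_zero_of_eq' := fun v i j hij hne => h v i j hne hij }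
  have hg : ∀ v, f v = g v := fun _ => rfl
  have hm : ((m.factorial : ℕ) : ℝ) ≠ 0 := by exact_mod_cast m.factorial_ne_zero
  change ((m.factorial : ℝ)⁻¹) • ContinuousMultilinearMap.alternatization f v = f v
  rw [ContinuousMultilinearMap.alternatization_apply_apply]
  have : ∀ σ : Equiv.Perm (Fin m), Equiv.Perm.sign σ • f (v ∘ σ) = f v := by
    intro σ
    rw [hg, hg, g.map_perm, smul_smul]
    rcases Int.units_eq_one_or (Equiv.Perm.sign σ) with h | h <;> simp [h]
  simp [this, Fintype.card_perm]
  field_simp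

theorem sum_eq_extDeriv {U : Set E} (hU : IsOpen U) (ω : E → (E [×m]→L[ℝ] ℝ))
    (hω : ContDiffOn ℝ (⊤ : ℕ∞) ω U)
    (halt : ∀ y ∈ U, ∀ v : Fin m → E, ∀ i j, i ≠ j → v i = v j → ω y v = 0)
    {y : E} (hy : y ∈ U) (v : Fin (m + 1) → E) :
    ∑ i : Fin (m + 1), (-1 : ℝ) ^ (i : ℕ) * fderiv ℝ ω y (v i) (fun j => v (i.succAbove j)) =
      extDeriv (fun y => altCLM E m (ω y)) y v := by
  have hd : DifferentiableAt ℝ ω y :=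
    (hω.contDiffAt (hU.mem_nhds hy)).differentiableAt (by simp)
  have hd2 : DifferentiableAt ℝ (fun y => altCLM E m (ω y)) y :=
    (altCLM E m).differentiableAt.comp y hd
  have h1 : ω =ᶠ[nhds y] fun z => ContinuousAlternatingMap.toContinuousMultilinearMapCLM ℝ
      (altCLM E m (ω z)) := by
    filter_upwards [hU.mem_nhds hy] with z hz
    ext w
    exact (altCLM_apply_of_alt (ω z) (halt z hz) w).symm
  have h2 : fderiv ℝ ω y = (ContinuousAlternatingMap.toContinuousMultilinearMapCLM ℝ).comp
      (fderiv ℝ (fun y => altCLM E m (ω y)) y) := by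
    rw [h1.fderiv_eq]
    exact ((ContinuousAlternatingMap.toContinuousMultilinearMapCLM ℝ).hasFDerivAt.comp y
      hd2.hasFDerivAt).fderiv
  rw [h2, extDeriv, ContinuousAlternatingMap.alternatizeUncurryFin_apply]
  refine Finset.sum_congr rfl fun i _ => ?_
  rcases neg_one_pow_eq_or ℤ (i : ℕ) with h | h
  · have h' : (-1 : ℝ) ^ (i : ℕ) = 1 := by exact_mod_cast congrArg (Int.cast : ℤ → ℝ) h
    rw [h, h', one_mul, one_smul]
    rfl
  · have h' : (-1 : ℝ) ^ (i : ℕ) = -1 := by exact_mod_cast congrArg (Int.cast : ℤ → ℝ) h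
    rw [h, h', neg_one_mul, neg_one_smul]
    rfl

theorem extDeriv_eq_zero_of_pullback {U : Set E} (hU : IsOpen U) {u : E → E}
    (hu : ContDiffOn ℝ (⊤ : ℕ∞) u U) (c : E [⋀^Fin m]→L[ℝ] ℝ) (α : E → E [⋀^Fin m]→L[ℝ] ℝ)
    (hα : ∀ y ∈ U, α y = c.compContinuousLinearMap (fderiv ℝ u y)) {y : E} (hy : y ∈ U) :
    extDeriv α y = 0 := by
  have h1 : α =ᶠ[nhds y] fun y => ((fun _ : E => c) (u y)).compContinuousLinearMap (fderiv ℝ u y) := by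
    filter_upwards [hU.mem_nhds hy] with z hz using hα z hz
  rw [h1.extDeriv_eq, extDeriv_pullback (r := (⊤ : ℕ∞)) (differentiableAt_const _)
    (hu.contDiffAt (hU.mem_nhds hy)) (by
      rw [minSmoothness_of_isRCLikeNormedField]
      exact WithTop.coe_le_coe.2 (le_top : (2 : ℕ∞) ≤ ⊤))]
  ext v
  simp [extDeriv, ContinuousAlternatingMap.alternatizeUncurryFin_apply]

theorem forward_dir {n m : ℕ} {U : Set (Fin n → ℝ)} (hU : IsOpen U)
    (ω : (Fin n → ℝ) → ((Fin n → ℝ) [×m]→L[ℝ] ℝ))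
    (hω : ContDiffOn ℝ (⊤ : ℕ∞) ω U)
    (halt : ∀ y ∈ U, ∀ v : Fin m → (Fin n → ℝ), ∀ i j, i ≠ j → v i = v j → ω y v = 0)
    {V : Set (Fin n → ℝ)} (hV : IsOpen V) {x} (hxV : x ∈ V) (hVU : V ⊆ U)
    {u : (Fin n → ℝ) → (Fin n → ℝ)} (hu : ContDiffOn ℝ (⊤ : ℕ∞) u V)
    (hb : ∀ y ∈ V, Function.Bijective (fderiv ℝ u y))
    (c : (Fin n → ℝ) [×m]→L[ℝ] ℝ)
    (hc : ∀ y ∈ V, ∀ v : Fin m → (Fin n → ℝ), ω y v = c (fun i => fderiv ℝ u y (v i)))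
    {y} (hy : y ∈ V) (v : Fin (m + 1) → (Fin n → ℝ)) :
    ∑ i : Fin (m + 1), (-1 : ℝ) ^ (i : ℕ) * fderiv ℝ ω y (v i) (fun j => v (i.succAbove j)) = 0 := by
  rw [sum_eq_extDeriv hU ω hω halt (hVU hy)]
  have hcalt : ∀ v : Fin m → (Fin n → ℝ), ∀ i j, i ≠ j → v i = v j → c v = 0 := by
    intro v i j hij hv
    choose g hg using (hb x hxV).2
    have := hc x hxV (fun i => g (v i))
    rw [halt x (hVU hxV) _ i j hij (by rw [hv])] at this
    simpa [hg] using this.symm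
  rw [extDeriv_eq_zero_of_pullback hV hu (altCLM _ m c) _ _ hy]
  · rfl
  · intro z hz
    ext w
    rw [altCLM_apply_of_alt _ (halt z (hVU hz)), hc z hz,
      ContinuousAlternatingMap.compContinuousLinearMap_apply, altCLM_apply_of_alt _ hcalt]
    rfl
end AltLift
section DetForm
variable {m : ℕ}

/-- Standard basis. -/
noncomputable abbrev stdB (m : ℕ) : Module.Basis (Fin (m + 1)) ℝ (Fin (m + 1) → ℝ) :=
  Pi.basisFun ℝ (Fin (m + 1))

theorem continuous_stdB_det : Continuous (fun v : Fin (m + 1) → Fin (m + 1) → ℝ => (stdB m).det v) := by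
  have : (fun v : Fin (m + 1) → Fin (m + 1) → ℝ => (stdB m).det v) =
      fun v => Matrix.det (Matrix.of v) := by
    funext v
    rw [Module.Basis.det_apply, ← Matrix.det_transpose]
    congr 1
  rw [this]
  exact Continuous.matrix_det continuous_id

/-- The constant form `dx_1 ∧ ... ∧ dx_m`. -/
noncomputable def stdForm (m : ℕ) : (Fin (m + 1) → ℝ) [⋀^Fin m]→L[ℝ] ℝ :=
  { (stdB m).det.curryLeft (stdB m 0) with
    cont := by
      change Continuous fun v : Fin m → Fin (m + 1) → ℝ =>
        (stdB m).det (Fin.cons (stdB m 0) v)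
      refine continuous_stdB_det.comp ?_
      exact Continuous.finCons continuous_const continuous_id }

theorem stdForm_apply (v : Fin m → Fin (m + 1) → ℝ) :
    stdForm m v = (stdB m).det (Fin.cons (stdB m 0) v : Fin (m + 1) → Fin (m + 1) → ℝ) := rfl

theorem stdForm_comp (A : (Fin (m + 1) → ℝ) →ₗ[ℝ] (Fin (m + 1) → ℝ))
    (v : Fin m → Fin (m + 1) → ℝ) :
    (stdB m).det (Fin.cons (A (stdB m 0)) (fun i => A (v i)) : Fin (m + 1) → Fin (m + 1) → ℝ) =
      LinearMap.det A * stdForm m v := by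
  rw [stdForm_apply, ← Module.Basis.det_comp]
  congr 1
  funext i
  refine Fin.cases ?_ (fun j => ?_) i <;> simp

theorem stdForm_removeNth (i : Fin (m + 1)) :
    stdForm m (i.removeNth (stdB m)) = if i = 0 then 1 else 0 := by
  split_ifs with h
  · subst h
    rw [stdForm_apply, ← (stdB m).det_self]
    congr 1
    funext j
    refine Fin.cases ?_ (fun j => ?_) j <;> simp [Fin.tail]
  · rw [stdForm_apply]
    obtain ⟨j, hj⟩ := Fin.exists_succAbove_eq (x := 0) (y := i) (Ne.symm h)
    refine (stdB m).det.map_eq_zero_of_eq _ (i := 0) (j := j.succ) ?_ (Fin.succ_ne_zero j).symm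
    simp [Fin.removeNth, hj]

/-- The vector field contracting the volume form to a given form. -/
noncomputable def kerVec (m : ℕ) :
    ((Fin (m + 1) → ℝ) [⋀^Fin m]→L[ℝ] ℝ) →L[ℝ] (Fin (m + 1) → ℝ) :=
  ∑ i : Fin (m + 1), (((-1 : ℝ) ^ (i : ℕ)) •
    (ContinuousAlternatingMap.apply ℝ (Fin (m + 1) → ℝ) ℝ (i.removeNth (stdB m)))).smulRight (stdB m i)

theorem kerVec_apply (α : (Fin (m + 1) → ℝ) [⋀^Fin m]→L[ℝ] ℝ) :
    kerVec m α = ∑ i : Fin (m + 1), ((-1 : ℝ) ^ (i : ℕ) * α (i.removeNth (stdB m))) • stdB m i := by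
  simp [kerVec]

theorem det_kerVec (α : (Fin (m + 1) → ℝ) [⋀^Fin m]→L[ℝ] ℝ) (w : Fin m → Fin (m + 1) → ℝ) :
    (stdB m).det (Fin.cons (kerVec m α) w : Fin (m + 1) → Fin (m + 1) → ℝ) = α w := by
  let φ : (Fin (m + 1) → ℝ) →ₗ[ℝ] ℝ :=
    { toFun := fun t => (stdB m).det.curryLeft t w
      map_add' := fun s t => by rw [map_add]; rfl
      map_smul' := fun c t => by rw [map_smul]; rfl }
  have hφ : ∀ t, φ t = (stdB m).det (Fin.cons t w : Fin (m + 1) → Fin (m + 1) → ℝ) := fun t => rfl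
  by_cases hw : LinearIndependent ℝ w
  · let β := AlternatingMap.alternatizeUncurryFin (φ.smulRight α.toAlternatingMap)
    have hβ := β.eq_smul_basis_det (stdB m)
    have h1 : β (stdB m) = φ (kerVec m α) := by
      rw [kerVec_apply, map_sum, AlternatingMap.alternatizeUncurryFin_apply]
      refine Finset.sum_congr rfl fun i _ => ?_
      rw [map_smul, LinearMap.smulRight_apply, AlternatingMap.smul_apply,
        ContinuousAlternatingMap.coe_toAlternatingMap, smul_eq_mul, smul_eq_mul]
      rcases neg_one_pow_eq_or ℤ (i : ℕ) with h | h
      · have h' : (-1 : ℝ) ^ (i : ℕ) = 1 := by exact_mod_cast congrArg (Int.cast : ℤ → ℝ) h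
        rw [h, h', one_mul, one_smul, mul_comm]
      · have h' : (-1 : ℝ) ^ (i : ℕ) = -1 := by exact_mod_cast congrArg (Int.cast : ℤ → ℝ) h
        rw [h, h', neg_one_mul, neg_one_smul]
        ring
    have h2 : ∀ t, β (Fin.cons t w : Fin (m + 1) → Fin (m + 1) → ℝ) = φ t * α w := by
      intro t
      rw [AlternatingMap.alternatizeUncurryFin_apply, Fin.sum_univ_succ]
      have : ∀ i : Fin m, φ (w i) = 0 := by
        intro i
        rw [hφ]
        exact (stdB m).det.map_eq_zero_of_eq _ (i := 0) (j := i.succ) (by simp)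
          (Fin.succ_ne_zero i).symm
      simp [this]
    obtain ⟨t, ht⟩ : ∃ t, t ∉ Submodule.span ℝ (Set.range w) := by
      by_contra! hcon
      have h3 : Submodule.span ℝ (Set.range w) = ⊤ := by
        rw [eq_top_iff]; exact fun t _ => hcon t
      have h4 := finrank_span_eq_card hw
      rw [h3] at h4
      simp at h4
    have hli := hw.finCons ht
    have hu := (Module.Basis.is_basis_iff_det (stdB m)).1 ⟨hli, hli.span_eq_top_of_card_eq_finrank (by simp)⟩
    have h5 := h2 t
    rw [hβ, AlternatingMap.smul_apply, h1, smul_eq_mul, ← hφ t, mul_comm] at h5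
    rw [← hφ t] at hu
    rw [← hφ]
    exact mul_left_cancel₀ hu.ne_zero h5
  · have h0 : α w = 0 := α.toAlternatingMap.map_linearDependent w hw
    rw [h0]
    exact (stdB m).det.map_linearDependent _ fun h => hw (linearIndependent_finCons.1 h).1

theorem kerVec_ne_zero {α : (Fin (m + 1) → ℝ) [⋀^Fin m]→L[ℝ] ℝ} (h : α ≠ 0) : kerVec m α ≠ 0 := by
  intro h0
  apply h
  ext w
  rw [← det_kerVec, h0]
  exact (stdB m).det.map_coord_zero 0 rfl
end DetForm
section FlowBox
open Set Filter Topology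

theorem exists_smooth_ext {E F : Type} [NormedAddCommGroup E] [NormedSpace ℝ E]
    [FiniteDimensional ℝ E] [NormedAddCommGroup F] [NormedSpace ℝ F] {U : Set E} (hU : IsOpen U)
    {f : E → F} (hf : ContDiffOn ℝ (⊤ : ℕ∞) f U) {x : E} (hx : x ∈ U) :
    ∃ g : E → F, ContDiff ℝ (⊤ : ℕ∞) g ∧ g =ᶠ[𝓝 x] f := by
  obtain ⟨r, hr, hrU⟩ := Metric.nhds_basis_closedBall.mem_iff.1 (hU.mem_nhds hx)
  let φ : ContDiffBump x := ⟨r / 2, r, by positivity, by linarith⟩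
  refine ⟨fun y => φ y • f y, contDiff_iff_contDiffAt.2 fun y => ?_, ?_⟩
  · by_cases hy : y ∈ Metric.closedBall x r
    · exact φ.contDiffAt.smul (hf.contDiffAt (hU.mem_nhds (hrU hy)))
    · have : (fun y => φ y • f y) =ᶠ[𝓝 y] fun _ => 0 := by
        filter_upwards [Metric.isClosed_closedBall.isOpen_compl.mem_nhds hy] with z hz
        rw [φ.zero_of_le_dist, zero_smul]
        simp only [mem_compl_iff, Metric.mem_closedBall, not_le] at hz
        exact hz.le
      exact contDiffAt_const.congr_of_eventuallyEq this
  · filter_upwards [φ.eventuallyEq_one] with y hy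
    rw [hy]; simp

theorem exists_flowbox {m : ℕ} (X : (Fin (m + 1) → ℝ) → (Fin (m + 1) → ℝ))
    (hX : ContDiff ℝ (⊤ : ℕ∞) X) (x : Fin (m + 1) → ℝ) (hX0 : X x ≠ 0)
    {G : Set (Fin (m + 1) → ℝ)} (hG : IsOpen G) (hxG : x ∈ G) :
    ∃ e : OpenPartialHomeomorph (Fin (m + 1) → ℝ) (Fin (m + 1) → ℝ), 0 ∈ e.source ∧ e 0 = x ∧
      ContDiffOn ℝ (⊤ : ℕ∞) e e.source ∧ ContDiffOn ℝ (⊤ : ℕ∞) e.symm e.target ∧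
      (∀ y ∈ e.source, e y ∈ G) ∧
      ∀ y ∈ e.source, ∃ A : (Fin (m + 1) → ℝ) ≃L[ℝ] (Fin (m + 1) → ℝ),
        HasFDerivAt e (A : (Fin (m + 1) → ℝ) →L[ℝ] (Fin (m + 1) → ℝ)) y ∧
        A (stdB m 0) = X (e y) := by
  obtain ⟨F, O, hO, h0O, hF, hF0, hFX⟩ := exists_smooth_flow X hX x
  obtain ⟨L, hL⟩ := SeparatingDual.exists_continuousLinearEquiv_apply_eq (R := ℝ)
    (x := stdB m 0) (y := X x) ((stdB m).ne_zero 0) hX0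
  let E := Fin (m + 1) → ℝ
  let p0 : E →L[ℝ] ℝ := ContinuousLinearMap.proj 0
  let P : E →L[ℝ] E := ContinuousLinearMap.id ℝ E - p0.smulRight (stdB m 0)
  let M : E →L[ℝ] ℝ × E := p0.prod ((L : E →L[ℝ] E).comp P)
  let q : E → ℝ × E := fun y => (0, x) + M y
  have hq : ContDiff ℝ (⊤ : ℕ∞) q := contDiff_const.add M.contDiff
  have hq0 : q 0 = (0, x) := by simp [q]
  have hqd : ∀ y, HasFDerivAt q M y := fun y => M.hasFDerivAt.const_add _
  have hp0 : p0 (stdB m 0) = 1 := by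
    change (stdB m 0) 0 = 1
    simp
  have hM0 : M (stdB m 0) = (1, 0) := by
    ext1
    · exact hp0
    · change L (stdB m 0 - p0 (stdB m 0) • stdB m 0) = 0
      rw [hp0]; simp
  have hFd : ∀ p ∈ O, DifferentiableAt ℝ F p := fun p hp =>
    (hF.contDiffAt (hO.mem_nhds hp)).differentiableAt (by simp)
  let ψ : E → E := F ∘ q
  have hψd : ∀ y, q y ∈ O → HasFDerivAt ψ ((fderiv ℝ F (q y)).comp M) y := fun y hy =>
    (hFd _ hy).hasFDerivAt.comp y (hqd y)
  have hO' : IsOpen (q ⁻¹' O) := hO.preimage hq.continuous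
  have hψs : ContDiffOn ℝ (⊤ : ℕ∞) ψ (q ⁻¹' O) := hF.comp hq.contDiffOn fun y hy => hy
  have hOG : IsOpen (q ⁻¹' O ∩ ψ ⁻¹' G) := hψs.continuousOn.isOpen_inter_preimage hO' hG
  have hψ0 : ψ 0 = x := by
    change F (q 0) = x
    rw [hq0]; exact hF0 x h0O
  have h0mem : (0 : E) ∈ q ⁻¹' O ∩ ψ ⁻¹' G := ⟨by rw [mem_preimage, hq0]; exact h0O, by
    rw [mem_preimage, hψ0]; exact hxG⟩
  -- derivative of the flow at time zero
  have hDF2 : ∀ v : E, fderiv ℝ F (0, x) (0, v) = v := by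
    intro v
    have h1 : HasFDerivAt (fun z : E => F (0, z))
        ((fderiv ℝ F (0, x)).comp (ContinuousLinearMap.inr ℝ ℝ E)) x := by
      have h2 : HasFDerivAt (fun z : E => ((0 : ℝ), z)) (ContinuousLinearMap.inr ℝ ℝ E) x :=
        hasFDerivAt_prodMk_right _ _
      exact (hFd _ h0O).hasFDerivAt.comp x h2
    have h3 : (fun z : E => F (0, z)) =ᶠ[𝓝 x] id := by
      have hc : Continuous fun z : E => ((0 : ℝ), z) := by fun_prop
      filter_upwards [(hO.preimage hc).mem_nhds h0O] with z hz
      exact hF0 z hz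
    have h4 := (h1.congr_of_eventuallyEq h3.symm).unique (hasFDerivAt_id x)
    have := congrArg (fun T : E →L[ℝ] E => T v) h4
    exact this
  have hDψ0 : HasFDerivAt ψ (L : E →L[ℝ] E) 0 := by
    have h1 := hψd 0 h0mem.1
    have h2 : (fderiv ℝ F (q 0)).comp M = (L : E →L[ℝ] E) := by
      refine ContinuousLinearMap.ext fun v => ?_
      rw [hq0]
      change fderiv ℝ F (0, x) (p0 v, L (v - p0 v • stdB m 0)) = L v
      have h3 : ((p0 v, L (v - p0 v • stdB m 0)) : ℝ × E) =
          p0 v • ((1 : ℝ), (0 : E)) + ((0 : ℝ), L (v - p0 v • stdB m 0)) := by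
        simp
      rw [h3, map_add, map_smul, hDF2, hFX _ h0O, hF0 x h0O, map_sub, map_smul, hL]
      abel
    rwa [h2] at h1
  obtain ⟨e, he0, heS, hee, heA, hes⟩ := ift_smooth hOG (hψs.mono inter_subset_left) h0mem L hDψ0
  have heq : (e : E → E) = ψ := funext hee
  refine ⟨e, he0, by rw [hee, hψ0], ?_, hes, ?_, ?_⟩
  · rw [heq]; exact hψs.mono fun y hy => (heS hy).1
  · intro y hy; rw [hee]; exact (heS hy).2
  · intro y hy
    obtain ⟨A, hA⟩ := heA y hy
    refine ⟨A, by rw [heq]; exact hA, ?_⟩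
    have h1 := hA.unique (hψd y (heS hy).1)
    have := congrArg (fun T : E →L[ℝ] E => T (stdB m 0)) h1
    rw [hee]
    change A (stdB m 0) = X (F (q y))
    rw [← hFX _ (heS hy).1, ← hM0]
    exact this
end FlowBox
section Rescale
open Set Filter Topology
variable {k : ℕ}

theorem exists_primitive (h : (Fin (k + 2) → ℝ) → ℝ) (hh : ContDiff ℝ (⊤ : ℕ∞) h) :
    ∃ w : (Fin (k + 2) → ℝ) → ℝ, ContDiff ℝ (⊤ : ℕ∞) w ∧ w 0 = 0 ∧
      (∀ y, fderiv ℝ w y (stdB (k + 1) 0) = 0) ∧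
      ∀ y, fderiv ℝ w y (stdB (k + 1) 1) = h (y - y 0 • stdB (k + 1) 0) := by
  let E := Fin (k + 2) → ℝ
  let e0 : E := stdB (k + 1) 0
  let e1 : E := stdB (k + 1) 1
  have e00 : e0 0 = 1 := by simp [e0]
  have e01 : e0 1 = 0 := by simp [e0]
  have e10 : e1 0 = 0 := by simp [e1]
  have e11 : e1 1 = 1 := by simp [e1]
  let p0 : E →L[ℝ] ℝ := ContinuousLinearMap.proj 0
  let p1 : E →L[ℝ] ℝ := ContinuousLinearMap.proj 1
  let ρ : E →L[ℝ] E := ContinuousLinearMap.id ℝ E - p0.smulRight e0 - p1.smulRight e1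
  have hρ : ∀ y, ρ y = y - y 0 • e0 - y 1 • e1 := fun y => rfl
  let w : E → ℝ := fun y => ∫ τ in (0:ℝ)..y 1, h (ρ y + τ • e1)
  let g : C(Icc (0:ℝ) 1, E) := ⟨fun t => (t : ℝ) • e1, by fun_prop⟩
  let Lm : E →L[ℝ] C(Icc (0:ℝ) 1, E) := (flowConst E).comp ρ + p1.smulRight g
  have hw : ∀ y, w y = y 1 * flowVol ℝ (nem (Icc (0:ℝ) 1) h hh.continuous (Lm y)) 1 := by
    intro y
    change _ = y 1 * ∫ τ in (0:ℝ)..1, h (ρ y + y 1 • ((projIcc 0 1 zero_le_one τ : Icc (0:ℝ) 1) : ℝ) • e1)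
    have h1 : ∫ τ in (0:ℝ)..1, h (ρ y + y 1 • ((projIcc 0 1 zero_le_one τ : Icc (0:ℝ) 1) : ℝ) • e1) =
        ∫ τ in (0:ℝ)..1, (fun s => h (ρ y + s • e1)) (y 1 * τ) := by
      refine intervalIntegral.integral_congr fun τ hτ => ?_
      rw [uIcc_of_le zero_le_one] at hτ
      simp only [projIcc_of_mem _ hτ, smul_smul]
    rw [h1]
    have h2 := intervalIntegral.mul_integral_comp_mul_left (a := (0 : ℝ)) (b := 1)
      (f := fun s => h (ρ y + s • e1)) (y 1)
    rw [mul_zero, mul_one] at h2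
    exact h2.symm
  have hadd : ∀ (y v : E) (s : ℝ) (i : Fin (k + 2)), (y + s • v) i = y i + s * v i :=
    fun _ _ _ _ => rfl
  have hws : ContDiff ℝ (⊤ : ℕ∞) w := by
    rw [show w = _ from funext hw]
    refine p1.contDiff.mul ?_
    have h2 : ContDiff ℝ (⊤ : ℕ∞) fun y =>
        flowVol ℝ (nem (Icc (0:ℝ) 1) h hh.continuous (Lm y)) :=
      (flowVol ℝ).contDiff.comp ((contDiff_nem h hh).comp Lm.contDiff)
    exact (ContinuousMap.evalCLM ℝ (1 : Icc (0:ℝ) 1)).contDiff.comp h2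
  have hline : ∀ y v, HasDerivAt (fun s : ℝ => w (y + s • v)) (fderiv ℝ w y v) 0 := by
    intro y v
    have h1 : HasDerivAt (fun s : ℝ => y + s • v) v 0 := by
      simpa using ((hasDerivAt_id (0:ℝ)).smul_const v).const_add y
    have h2 : HasFDerivAt w (fderiv ℝ w y) (y + (0:ℝ) • v) := by
      rw [zero_smul, add_zero]
      exact (hws.differentiable (by simp) y).hasFDerivAt
    exact h2.comp_hasDerivAt (0:ℝ) h1
  refine ⟨w, hws, by simp [w], fun y => ?_, fun y => ?_⟩
  · have h1 : (fun s : ℝ => w (y + s • e0)) = fun _ => w y := by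
      funext s
      have : ρ (y + s • e0) = ρ y := by
        rw [hρ, hρ]
        simp only [hadd, e00, e01, mul_one, mul_zero, add_zero]
        module
      simp only [w, this, hadd, e01, mul_zero, add_zero]
    have h2 := hline y e0
    rw [h1] at h2
    exact h2.unique (hasDerivAt_const _ _)
  · have h1 : (fun s : ℝ => w (y + s • e1)) = fun s => ∫ τ in (0:ℝ)..(y 1 + s), h (ρ y + τ • e1) := by
      funext s
      have : ρ (y + s • e1) = ρ y := by
        rw [hρ, hρ]
        simp only [hadd, e10, e11, mul_one, mul_zero, add_zero]
        module
      simp only [w, this, hadd, e11, mul_one]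
    have h2 := hline y e1
    rw [h1] at h2
    have hc : Continuous fun τ : ℝ => h (ρ y + τ • e1) := hh.continuous.comp (by fun_prop)
    have h3 : HasDerivAt (fun s : ℝ => ∫ τ in (0:ℝ)..s, h (ρ y + τ • e1)) (h (ρ y + y 1 • e1)) (y 1 + 0) := by
      rw [add_zero]
      exact hc.integral_hasStrictDerivAt 0 (y 1) |>.hasDerivAt
    have h4 := h3.comp_const_add (y 1) 0
    rw [h2.unique h4, hρ]
    congr 1
    module

theorem exists_rescale (h : (Fin (k + 2) → ℝ) → ℝ) (hh : ContDiff ℝ (⊤ : ℕ∞) h) (h0 : h 0 ≠ 0)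
    {B : Set (Fin (k + 2) → ℝ)} (hB : IsOpen B) (h0B : 0 ∈ B) :
    ∃ e : OpenPartialHomeomorph (Fin (k + 2) → ℝ) (Fin (k + 2) → ℝ), 0 ∈ e.source ∧
      e.source ⊆ B ∧ ContDiffOn ℝ (⊤ : ℕ∞) e e.source ∧
      ∀ y ∈ e.source, ∃ A : (Fin (k + 2) → ℝ) ≃L[ℝ] (Fin (k + 2) → ℝ),
        HasFDerivAt e (A : (Fin (k + 2) → ℝ) →L[ℝ] (Fin (k + 2) → ℝ)) y ∧
        A (stdB (k + 1) 0) = stdB (k + 1) 0 ∧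
        LinearMap.det ((A : (Fin (k + 2) → ℝ) →L[ℝ] (Fin (k + 2) → ℝ)) :
          (Fin (k + 2) → ℝ) →ₗ[ℝ] (Fin (k + 2) → ℝ)) = h (y - y 0 • stdB (k + 1) 0) := by
  obtain ⟨w, hw, hw0, hwe0, hwe1⟩ := exists_primitive h hh
  let E := Fin (k + 2) → ℝ
  let e0 : E := stdB (k + 1) 0
  let e1 : E := stdB (k + 1) 1
  have e01 : e0 1 = 0 := by simp [e0]
  have e11 : e1 1 = 1 := by simp [e1]
  let p1 : E →L[ℝ] ℝ := ContinuousLinearMap.proj 1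
  let f : E → E := fun y => y + (w y - p1 y) • e1
  have hf : ContDiff ℝ (⊤ : ℕ∞) f := contDiff_id.add ((hw.sub p1.contDiff).smul contDiff_const)
  let D : E → E →L[ℝ] E := fun y => ContinuousLinearMap.id ℝ E + (fderiv ℝ w y - p1).smulRight e1
  have hD : ∀ y, HasFDerivAt f (D y) y := fun y =>
    (hasFDerivAt_id y).add
      (((hw.differentiable (by simp) y).hasFDerivAt.sub p1.hasFDerivAt).smul_const e1)
  have hDdet : ∀ y, LinearMap.det (D y : E →ₗ[ℝ] E) = h (y - y 0 • e0) := by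
    intro y
    have h1 : (D y : E →ₗ[ℝ] E) =
        LinearMap.transvection ((fderiv ℝ w y - p1 : E →L[ℝ] ℝ) : E →ₗ[ℝ] ℝ) e1 := by
      ext1; rfl
    rw [h1, LinearMap.transvection.det]
    change 1 + (fderiv ℝ w y e1 - e1 1) = _
    rw [hwe1, e11]; ring
  have hDe0 : ∀ y, D y e0 = e0 := by
    intro y
    change e0 + (fderiv ℝ w y e0 - e0 1) • e1 = e0
    rw [hwe0, e01]; simp
  have hd0 : (D 0).det ≠ 0 := by
    change LinearMap.det (D 0 : E →ₗ[ℝ] E) ≠ 0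
    rw [hDdet, show (0 : E) 0 = 0 from rfl, zero_smul, sub_zero]; exact h0
  obtain ⟨e, he0, heB, hee, heA, -⟩ := ift_smooth hB hf.contDiffOn h0B
    ((D 0).toContinuousLinearEquivOfDetNeZero hd0) (by
      rw [ContinuousLinearMap.coe_toContinuousLinearEquivOfDetNeZero]; exact hD 0)
  have heq : (e : E → E) = f := funext hee
  refine ⟨e, he0, heB, by rw [heq]; exact hf.contDiffOn, fun y hy => ?_⟩
  obtain ⟨A, hA⟩ := heA y hy
  have hAD : (A : E →L[ℝ] E) = D y := hA.unique (hD y)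
  refine ⟨A, by rw [heq]; exact hA, ?_, ?_⟩
  · change (A : E →L[ℝ] E) e0 = e0
    rw [hAD, hDe0]
  · rw [hAD]; exact hDdet y
end Rescale
section Backward
open Set Filter Topology
variable {k : ℕ}

theorem contDiff_stdB_det {m : ℕ} : ContDiff ℝ (⊤ : ℕ∞)
    (fun v : Fin (m + 1) → Fin (m + 1) → ℝ => (stdB m).det v) := by
  let D : ContinuousMultilinearMap ℝ (fun _ : Fin (m + 1) => Fin (m + 1) → ℝ) ℝ :=
    { (stdB m).det.toMultilinearMap with cont := continuous_stdB_det }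
  exact D.contDiff

theorem det_eq_stdB_det {m : ℕ} (A : (Fin (m + 1) → ℝ) →ₗ[ℝ] (Fin (m + 1) → ℝ)) :
    LinearMap.det A = (stdB m).det fun i => A (stdB m i) := by
  have := (stdB m).det_comp A (stdB m)
  rw [(stdB m).det_self, mul_one] at this
  exact this.symm

theorem fderiv_of_extDeriv_zero {m : ℕ} (h : (Fin (m + 1) → ℝ) → ℝ) {y : Fin (m + 1) → ℝ}
    (hd : DifferentiableAt ℝ h y) (h0 : extDeriv (fun z => h z • stdForm m) y = 0) :
    fderiv ℝ h y (stdB m 0) = 0 := by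
  have h1 := extDeriv_apply (ω := fun z => h z • stdForm m) (hd.smul_const _) (stdB m)
  rw [h0, Fin.sum_univ_succ] at h1
  have h2 : ∀ i : Fin m, (fun z => (h z • stdForm m) (i.succ.removeNth (stdB m))) = fun _ => 0 := by
    intro i
    funext z
    rw [ContinuousAlternatingMap.smul_apply, stdForm_removeNth]
    simp [Fin.succ_ne_zero]
  have h3 : (fun z => (h z • stdForm m) ((0 : Fin (m + 1)).removeNth (stdB m))) = h := by
    funext z
    rw [ContinuousAlternatingMap.smul_apply, stdForm_removeNth]
    simp
  simp only [h2, h3] at h1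
  simpa using h1.symm

theorem const_along {m : ℕ} (h : (Fin (m + 1) → ℝ) → ℝ) {r : ℝ}
    (hd : ∀ y ∈ Metric.ball (0 : Fin (m + 1) → ℝ) r, DifferentiableAt ℝ h y)
    (h0 : ∀ y ∈ Metric.ball (0 : Fin (m + 1) → ℝ) r, fderiv ℝ h y (stdB m 0) = 0)
    {y : Fin (m + 1) → ℝ} (hy : y ∈ Metric.ball (0 : Fin (m + 1) → ℝ) r) :
    y - y 0 • stdB m 0 ∈ Metric.ball (0 : Fin (m + 1) → ℝ) r ∧ h (y - y 0 • stdB m 0) = h y := by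
  have hmem : ∀ s ∈ Icc (0:ℝ) 1, y + s • (-(y 0) • stdB m 0) ∈ Metric.ball (0 : Fin (m + 1) → ℝ) r := by
    intro s hs
    rw [mem_ball_zero_iff] at hy ⊢
    refine lt_of_le_of_lt ?_ hy
    rw [pi_norm_le_iff_of_nonneg (norm_nonneg _)]
    intro i
    refine le_trans ?_ (norm_le_pi_norm y i)
    by_cases hi : i = 0
    · subst hi
      have : (y + s • (-(y 0) • stdB m 0)) 0 = (1 - s) * y 0 := by
        simp; ring
      rw [this, norm_mul, Real.norm_eq_abs (1 - s), abs_of_nonneg (by linarith [hs.2])]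
      exact mul_le_of_le_one_left (norm_nonneg _) (by linarith [hs.1])
    · simp [hi]
  have h1 : y + (1:ℝ) • (-(y 0) • stdB m 0) = y - y 0 • stdB m 0 := by module
  have hder : ∀ s ∈ Icc (0:ℝ) 1, HasDerivAt (fun s : ℝ => h (y + s • (-(y 0) • stdB m 0))) 0 s := by
    intro s hs
    have h2 : HasDerivAt (fun s : ℝ => y + s • (-(y 0) • stdB m 0)) (-(y 0) • stdB m 0) s := by
      simpa using ((hasDerivAt_id s).smul_const (-(y 0) • stdB m 0)).const_add y
    have h3 := (hd _ (hmem s hs)).hasFDerivAt.comp_hasDerivAt s h2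
    rw [map_smul, h0 _ (hmem s hs), smul_zero] at h3
    exact h3
  have h4 := constant_of_has_deriv_right_zero (a := (0:ℝ)) (b := 1)
    (fun s hs => (hder s hs).continuousAt.continuousWithinAt)
    (fun s hs => (hder s ⟨hs.1, hs.2.le⟩).hasDerivWithinAt) 1 (by simp)
  have h5 := hmem 1 (by simp)
  rw [h1] at h5
  refine ⟨h5, ?_⟩
  simp only [h1] at h4
  rw [h4]
  simp

theorem backward_dir {U : Set (Fin (k + 2) → ℝ)} (hU : IsOpen U)
    (α : (Fin (k + 2) → ℝ) → (Fin (k + 2) → ℝ) [⋀^Fin (k + 1)]→L[ℝ] ℝ)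
    (hα : ContDiffOn ℝ (⊤ : ℕ∞) α U) {x : Fin (k + 2) → ℝ} (hx : x ∈ U) (hx0 : α x ≠ 0)
    {G : Set (Fin (k + 2) → ℝ)} (hG : IsOpen G) (hxG : x ∈ G) (hGU : G ⊆ U)
    (hcl : ∀ y ∈ G, extDeriv α y = 0) :
    ∃ V : Set (Fin (k + 2) → ℝ), IsOpen V ∧ x ∈ V ∧ V ⊆ G ∧
      ∃ u : (Fin (k + 2) → ℝ) → (Fin (k + 2) → ℝ),
        ContDiffOn ℝ (⊤ : ℕ∞) u V ∧ Set.InjOn u V ∧ IsOpen (u '' V) ∧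
        (∀ y ∈ V, Function.Bijective (fderiv ℝ u y)) ∧
        ∀ y ∈ V, ∀ v : Fin (k + 1) → (Fin (k + 2) → ℝ),
          α y v = stdForm (k + 1) (fun i => fderiv ℝ u y (v i)) := by
  obtain ⟨α', hα's, hα'e⟩ := exists_smooth_ext hU hα hx
  obtain ⟨G', hG'sub, hG'o, hxG'⟩ := mem_nhds_iff.1 (inter_mem hα'e (hG.mem_nhds hxG))
  have hGG : ∀ y ∈ G', y ∈ G := fun y hy => (hG'sub hy).2
  have hαα : ∀ y ∈ G', α' y = α y := fun y hy => (hG'sub hy).1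
  let X : (Fin (k + 2) → ℝ) → (Fin (k + 2) → ℝ) := fun y => kerVec (k + 1) (α' y)
  have hX : ContDiff ℝ (⊤ : ℕ∞) X := (kerVec (k + 1)).contDiff.comp hα's
  have hX0 : X x ≠ 0 := kerVec_ne_zero (by rw [hαα x hxG']; exact hx0)
  obtain ⟨e₁, h0s, he10, he1s, he1symm, he1G, he1A⟩ := exists_flowbox X hX x hX0 hG'o hxG'
  let h : (Fin (k + 2) → ℝ) → ℝ := fun y =>
    LinearMap.det (fderiv ℝ e₁ y : (Fin (k + 2) → ℝ) →ₗ[ℝ] (Fin (k + 2) → ℝ))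
  have hS : IsOpen e₁.source := e₁.open_source
  have hhs : ContDiffOn ℝ (⊤ : ℕ∞) h e₁.source := by
    have h1 : ContDiffOn ℝ (⊤ : ℕ∞) (fderiv ℝ e₁) e₁.source := he1s.fderiv_of_isOpen hS (by simp)
    have h2 : h = fun y => (stdB (k + 1)).det fun i => fderiv ℝ e₁ y (stdB (k + 1) i) := by
      funext y; exact det_eq_stdB_det _
    rw [h2]
    refine contDiff_stdB_det.comp_contDiffOn ?_
    rw [contDiffOn_pi]
    intro i
    exact h1.clm_apply contDiffOn_const
  have hh0 : h 0 ≠ 0 := by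
    obtain ⟨A, hA, -⟩ := he1A 0 h0s
    change LinearMap.det (fderiv ℝ e₁ 0 : (Fin (k + 2) → ℝ) →ₗ[ℝ] (Fin (k + 2) → ℝ)) ≠ 0
    rw [hA.fderiv]
    exact (LinearEquiv.isUnit_det' A.toLinearEquiv).ne_zero
  have hη : ∀ y ∈ e₁.source, ∀ v : Fin (k + 1) → (Fin (k + 2) → ℝ),
      α (e₁ y) (fun i => fderiv ℝ e₁ y (v i)) = h y * stdForm (k + 1) v := by
    intro y hy v
    obtain ⟨A, hA, hA0⟩ := he1A y hy
    rw [← hαα _ (he1G y hy), ← det_kerVec]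
    change _ = LinearMap.det (fderiv ℝ e₁ y : (Fin (k + 2) → ℝ) →ₗ[ℝ] (Fin (k + 2) → ℝ)) * _
    rw [← stdForm_comp]
    have : kerVec (k + 1) (α' (e₁ y)) = fderiv ℝ e₁ y (stdB (k + 1) 0) := by
      rw [hA.fderiv]; exact hA0.symm
    rw [this]
    rfl
  have hhd : ∀ y ∈ e₁.source, DifferentiableAt ℝ h y := fun y hy =>
    (hhs.contDiffAt (hS.mem_nhds hy)).differentiableAt (by simp)
  have hhe0 : ∀ y ∈ e₁.source, fderiv ℝ h y (stdB (k + 1) 0) = 0 := by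
    intro y hy
    refine fderiv_of_extDeriv_zero h (hhd y hy) ?_
    have h1 : (fun z => h z • stdForm (k + 1)) =ᶠ[𝓝 y]
        fun z => (α (e₁ z)).compContinuousLinearMap (fderiv ℝ e₁ z) := by
      filter_upwards [hS.mem_nhds hy] with z hz
      ext v
      exact (hη z hz v).symm
    have hyG := hGG _ (he1G y hy)
    rw [h1.extDeriv_eq, extDeriv_pullback (r := (⊤ : ℕ∞))
      ((hα.contDiffAt (hU.mem_nhds (hGU hyG))).differentiableAt (by simp))
      (he1s.contDiffAt (hS.mem_nhds hy)) (by
        rw [minSmoothness_of_isRCLikeNormedField]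
        exact WithTop.coe_le_coe.2 (le_top : (2 : ℕ∞) ≤ ⊤)), hcl _ hyG]
    rfl
  obtain ⟨h', hh's, hh'e⟩ := exists_smooth_ext hS hhs h0s
  obtain ⟨r, hr, hrsub⟩ := Metric.mem_nhds_iff.1 (inter_mem hh'e (hS.mem_nhds h0s))
  have hh'0 : h' 0 ≠ 0 := by
    rw [hh'e.self_of_nhds]; exact hh0
  obtain ⟨e₂, h0s2, he2B, he2s, he2A⟩ := exists_rescale h' hh's hh'0
    (B := Metric.ball 0 r) Metric.isOpen_ball (Metric.mem_ball_self hr)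
  have hsub : e₂.source ⊆ e₁.source := fun y hy => (hrsub (he2B hy)).2
  let ee := e₁.symm.trans e₂
  have heesrc : ∀ y, y ∈ ee.source ↔ y ∈ e₁.target ∧ e₁.symm y ∈ e₂.source := by
    intro y
    rw [OpenPartialHomeomorph.trans_source]
    rfl
  have key : ∀ y ∈ ee.source, ∃ A₁ A₂ : (Fin (k + 2) → ℝ) ≃L[ℝ] (Fin (k + 2) → ℝ),
      HasFDerivAt ee ((A₁.symm.trans A₂ : (Fin (k + 2) → ℝ) ≃L[ℝ] (Fin (k + 2) → ℝ)) :
        (Fin (k + 2) → ℝ) →L[ℝ] (Fin (k + 2) → ℝ)) y ∧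
      ∀ v : Fin (k + 1) → (Fin (k + 2) → ℝ), α y (fun i => A₁ (v i)) = stdForm (k + 1) (fun i => A₂ (v i)) := by
    intro y hy
    obtain ⟨hyt, hz⟩ := (heesrc y).1 hy
    obtain ⟨A₁, hA₁, -⟩ := he1A _ (hsub hz)
    obtain ⟨A₂, hA₂, hA₂0, hA₂d⟩ := he2A _ hz
    refine ⟨A₁, A₂, ?_, ?_⟩
    · have h1 := e₁.hasFDerivAt_symm hyt hA₁
      exact hA₂.comp y h1
    · intro v
      have h1 := hη _ (hsub hz) v
      rw [e₁.right_inv hyt, hA₁.fderiv] at h1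
      have h2 := stdForm_comp ((A₂ : (Fin (k + 2) → ℝ) →L[ℝ] (Fin (k + 2) → ℝ)) :
        (Fin (k + 2) → ℝ) →ₗ[ℝ] (Fin (k + 2) → ℝ)) v
      have h3 := const_along h (r := r) (fun z hz => hhd z (hrsub hz).2)
        (fun z hz => hhe0 z (hrsub hz).2) (he2B hz)
      have h4 : h' (e₁.symm y - e₁.symm y 0 • stdB (k + 1) 0) = h (e₁.symm y) := by
        rw [← h3.2]
        exact (hrsub h3.1).1
      rw [hA₂d, h4] at h2
      refine h1.trans (h2.symm.trans ?_)
      rw [stdForm_apply]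
      congr 1
      funext i
      refine Fin.cases ?_ (fun j => ?_) i
      · exact hA₂0
      · rfl
  refine ⟨ee.source, ee.open_source, ?_, ?_, ee, ?_, ee.injOn, ?_, ?_, ?_⟩
  · rw [heesrc, ← he10]
    refine ⟨e₁.map_source h0s, ?_⟩
    rw [e₁.left_inv h0s]; exact h0s2
  · intro y hy
    obtain ⟨hyt, hz⟩ := (heesrc y).1 hy
    have := hGG _ (he1G _ (hsub hz))
    rwa [e₁.right_inv hyt] at this
  · exact he2s.comp (he1symm.mono fun y hy => ((heesrc y).1 hy).1) fun y hy => ((heesrc y).1 hy).2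
  · rw [ee.image_source_eq_target]; exact ee.open_target
  · intro y hy
    obtain ⟨A₁, A₂, hA, -⟩ := key y hy
    rw [hA.fderiv]
    exact (A₁.symm.trans A₂).bijective
  · intro y hy v
    obtain ⟨A₁, A₂, hA, hA2⟩ := key y hy
    rw [hA.fderiv]
    have := hA2 (fun i => A₁.symm (v i))
    simp only [ContinuousLinearEquiv.apply_symm_apply] at this
    exact this
end Backward
end Helpers

theorem codimOneForm_constantCoefficients_iff_closed (n : ℕ) (hn : 2 ≤ n)
    (U : Set (Fin n → ℝ)) (hU : IsOpen U)
    (ω : (Fin n → ℝ) → ((Fin n → ℝ) [×(n - 1)]→L[ℝ] ℝ))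
    (hω : ContDiffOn ℝ (⊤ : ℕ∞) ω U)
    (halt : ∀ y ∈ U, ∀ v : Fin (n - 1) → (Fin n → ℝ), ∀ i j, i ≠ j → v i = v j →
      ω y v = 0)
    (x : Fin n → ℝ) (hx : x ∈ U) (hx0 : ω x ≠ 0) :
    HasConstantCoefficientsFormAt n (n - 1) U ω x ↔
      ∃ W : Set (Fin n → ℝ), IsOpen W ∧ x ∈ W ∧
        ∀ y ∈ W, ∀ v : Fin (n - 1 + 1) → (Fin n → ℝ),
          ∑ i : Fin (n - 1 + 1),
            (-1 : ℝ) ^ (i : ℕ) * fderiv ℝ ω y (v i) (fun j => v (i.succAbove j)) = 0 := by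
  constructor
  · rintro ⟨V, hV, hxV, hVU, u, hu, -, -, hb, c, hc⟩
    exact ⟨V, hV, hxV, fun y hy v => forward_dir hU ω hω halt hV hxV hVU hu hb c hc hy v⟩
  · rintro ⟨W, hW, hxW, hcl⟩
    obtain ⟨k, rfl⟩ : ∃ k, n = k + 2 := ⟨n - 2, by omega⟩
    have hα : ContDiffOn ℝ (⊤ : ℕ∞) (fun y => altCLM (Fin (k + 2) → ℝ) (k + 1) (ω y)) U :=
      (altCLM (Fin (k + 2) → ℝ) (k + 1)).contDiff.comp_contDiffOn hω
    have hval : ∀ y ∈ U, ∀ v, altCLM (Fin (k + 2) → ℝ) (k + 1) (ω y) v = ω y v :=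
      fun y hy v => altCLM_apply_of_alt (ω y) (halt y hy) v
    have hα0 : altCLM (Fin (k + 2) → ℝ) (k + 1) (ω x) ≠ 0 := by
      intro h0
      apply hx0
      ext v
      rw [← hval x hx v, h0]
      rfl
    obtain ⟨V, hV, hxV, hVG, u, hu, hinj, hop, hb, hc⟩ := backward_dir hU _ hα hx hα0
      (hU.inter hW) ⟨hx, hxW⟩ Set.inter_subset_left (by
        intro y hy
        ext v
        exact (sum_eq_extDeriv hU ω hω halt hy.1 v).symm.trans (hcl y hy.2 v))
    refine ⟨V, hV, hxV, hVG.trans Set.inter_subset_left, u, hu, hinj, hop, hb,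
      (stdForm (k + 1)).toContinuousMultilinearMap, fun y hy v => ?_⟩
    rw [← hval y (hVG hy).1 v]
    exact hc y hy v
end

section
/- Let ω be a smooth 2-form on an open set U ⊆ ℝⁿ such that the rank of the skew-symmetric bilinear form ω_y is equal to the same integer 2m for every y ∈ U. Then ω has constant coefficients on a neighbourhood of a point x ∈ U if and only if dω = 0 on a neighbourhood of x. (The 'if' direction is Darboux's theorem: a closed 2-form of constant rank 2m is locally Σ_{i=1}^{m} du^{2i−1} ∧ du^{2i} in suitable coordinates.) -/
/-- The radical `{v : ω(v,·) = 0}` of a (skew-symmetric) bilinear form on `ℝⁿ`,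
as a subspace; the rank of the form is `n` minus its dimension. -/
def bilinKernel (n : ℕ) (ω : (Fin n → ℝ) [×2]→L[ℝ] ℝ) : Submodule ℝ (Fin n → ℝ) where
  carrier := {v | ∀ z : Fin n → ℝ, ω ![v, z] = 0}
  zero_mem' := fun z => ω.map_coord_zero 0 (by simp)
  add_mem' := by
    intro a b ha hb z
    have h : (![a + b, z] : Fin 2 → (Fin n → ℝ))
        = Function.update (![a, z] : Fin 2 → (Fin n → ℝ)) 0 (a + b) := by
      ext i; fin_cases i <;> simp
    have ha' : (![a, z] : Fin 2 → (Fin n → ℝ))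
        = Function.update (![a, z] : Fin 2 → (Fin n → ℝ)) 0 a := by
      ext i; fin_cases i <;> simp
    have hb' : (![b, z] : Fin 2 → (Fin n → ℝ))
        = Function.update (![a, z] : Fin 2 → (Fin n → ℝ)) 0 b := by
      ext i; fin_cases i <;> simp
    rw [h, ω.map_update_add, ← ha', ← hb', ha z, hb z, add_zero]
  smul_mem' := by
    intro c a ha z
    have h : (![c • a, z] : Fin 2 → (Fin n → ℝ))
        = Function.update (![a, z] : Fin 2 → (Fin n → ℝ)) 0 (c • a) := by
      ext i; fin_cases i <;> simp
    have ha' : (![a, z] : Fin 2 → (Fin n → ℝ))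
        = Function.update (![a, z] : Fin 2 → (Fin n → ℝ)) 0 a := by
      ext i; fin_cases i <;> simp
    rw [h, ω.map_update_smul, ← ha', ha z, smul_zero]

section DarbouxProof
open Set Filter Topology
open scoped ContDiff

section Nemytskii

variable {I : Type} [TopologicalSpace I] [CompactSpace I]
variable {E F : Type} [NormedAddCommGroup E] [NormedSpace ℝ E]
  [NormedAddCommGroup F] [NormedSpace ℝ F]

/-- Pointwise application of a continuous family of operators. -/
noncomputable def nemLin (I E F : Type) [TopologicalSpace I] [CompactSpace I]
    [NormedAddCommGroup E] [NormedSpace ℝ E] [NormedAddCommGroup F] [NormedSpace ℝ F] :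
    C(I, E →L[ℝ] F) →L[ℝ] C(I, E) →L[ℝ] C(I, F) :=
  LinearMap.mkContinuous₂
    (LinearMap.mk₂ ℝ (fun (A : C(I, E →L[ℝ] F)) (h : C(I, E)) =>
        (⟨fun t => A t (h t), by fun_prop⟩ : C(I, F)))
      (by intros; ext t; simp) (by intros; ext t; simp)
      (by intros; ext t; simp) (by intros; ext t; simp)) 1 (by
    intro A h
    rw [one_mul, ContinuousMap.norm_le _ (by positivity)]
    intro t
    exact (ContinuousLinearMap.le_opNorm _ _).trans
      (mul_le_mul (A.norm_coe_le_norm t) (h.norm_coe_le_norm t) (norm_nonneg _) (by positivity)))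

@[simp] lemma nemLin_apply (A : C(I, E →L[ℝ] F)) (h : C(I, E)) (t : I) :
    nemLin I E F A h t = A t (h t) := rfl

lemma nem_hasFDerivAt (f : C(E, F)) (f' : C(E, E →L[ℝ] F))
    (hf : ∀ y, HasFDerivAt f (f' y) y) (γ : C(I, E)) :
    HasFDerivAt (fun γ : C(I, E) => f.comp γ) (nemLin I E F (f'.comp γ)) γ := by
  rw [hasFDerivAt_iff_isLittleO_nhds_zero, Asymptotics.isLittleO_iff]
  intro c hc
  have hK : IsCompact (range γ) := isCompact_range γ.continuous
  have hu := hK.uniformContinuousAt_of_continuousAt f'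
    (fun a _ => f'.continuous.continuousAt) (Metric.dist_mem_uniformity hc)
  rw [Metric.mem_uniformity_dist] at hu
  obtain ⟨δ, hδ, hu⟩ := hu
  filter_upwards [Metric.ball_mem_nhds (0 : C(I, E)) hδ] with h hh
  rw [mem_ball_zero_iff] at hh
  rw [ContinuousMap.norm_le _ (by positivity)]
  intro t
  have hht : ‖h t‖ < δ := (h.norm_coe_le_norm t).trans_lt hh
  have key : ‖f (γ t + h t) - f (γ t) - f' (γ t) (γ t + h t - γ t)‖
      ≤ c * ‖γ t + h t - γ t‖ := by
    refine (convex_ball (γ t) δ).norm_image_sub_le_of_norm_hasFDerivWithin_le'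
      (f' := f') (fun y _ => (hf y).hasFDerivWithinAt) ?_ (Metric.mem_ball_self hδ) ?_
    · intro y hy
      have := hu (a := γ t) (b := y) (by rw [dist_comm]; exact hy) (mem_range_self t)
      simp only [mem_ofPred_eq, dist_eq_norm] at this
      rw [norm_sub_rev]; exact this.le
    · simpa using hht
  simp only [add_sub_cancel_left] at key
  simpa using key.trans (mul_le_mul_of_nonneg_left (h.norm_coe_le_norm t) hc.le)

lemma nem_contDiff_nat (n : ℕ) : ∀ {F : Type} [NormedAddCommGroup F] [NormedSpace ℝ F]
    (f : C(E, F)), ContDiff ℝ ∞ f → ContDiff ℝ n (fun γ : C(I, E) => f.comp γ) := by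
  induction n with
  | zero =>
    intro F _ _ f hf
    exact contDiff_zero.2 (ContinuousMap.continuous_postcomp f)
  | succ n ih =>
    intro F _ _ f hf
    have h1 : ContDiff ℝ ∞ (fderiv ℝ f) := hf.fderiv_right (by simp)
    let f' : C(E, E →L[ℝ] F) := ⟨fderiv ℝ f, h1.continuous⟩
    have hd := nem_hasFDerivAt (I := I) f f' (fun y => (hf.differentiable (by simp) y).hasFDerivAt)
    push_cast
    rw [contDiff_succ_iff_hasFDerivAt]
    have hL : ContDiff ℝ n (fun A => nemLin I E F A) := ContinuousLinearMap.contDiff _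
    exact ⟨fun γ => nemLin I E F (f'.comp γ), hL.comp (ih f' h1), hd⟩

lemma nem_contDiff (f : C(E, F)) (hf : ContDiff ℝ ∞ f) :
    ContDiff ℝ ∞ (fun γ : C(I, E) => f.comp γ) :=
  contDiff_infty.2 fun n => nem_contDiff_nat n f hf

end Nemytskii


lemma ift_smooth_s5 {E F : Type} [NormedAddCommGroup E] [NormedSpace ℝ E] [CompleteSpace E]
    [NormedAddCommGroup F] [NormedSpace ℝ F]
    (f : E → F) (a : E) (hf : ∀ᶠ y in 𝓝 a, ContDiffAt ℝ ∞ f y) (f' : E ≃L[ℝ] F)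
    (hf' : HasFDerivAt f (f' : E →L[ℝ] F) a) :
    ∃ R : OpenPartialHomeomorph E F, (∀ y, R y = f y) ∧ a ∈ R.source ∧
      (∀ y ∈ R.source, ContDiffAt ℝ ∞ f y) ∧
      (∀ y ∈ R.source, ∃ e : E ≃L[ℝ] F, HasFDerivAt f (e : E →L[ℝ] F) y) ∧
      (∀ z ∈ R.target, ContDiffAt ℝ ∞ R.symm z) := by
  have ha := hf.self_of_nhds
  have hne : (∞ : WithTop ℕ∞) ≠ 0 := by simp
  let R₀ := ha.toOpenPartialHomeomorph f hf' hne
  have hsrc : a ∈ R₀.source := ha.mem_toOpenPartialHomeomorph_source hf' hne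
  have hcont : ContinuousAt (fderiv ℝ f) a :=
    (ha.fderiv_right (m := 0) (by simp)).continuousAt
  have hinv : ∀ᶠ y in 𝓝 a, ∃ e : E ≃L[ℝ] F, (e : E →L[ℝ] F) = fderiv ℝ f y := by
    have : range ((↑) : (E ≃L[ℝ] F) → E →L[ℝ] F) ∈ 𝓝 (fderiv ℝ f a) := by
      rw [hf'.fderiv]; exact ContinuousLinearEquiv.nhds f'
    exact hcont this
  obtain ⟨S, hS, hSo, haS⟩ := eventually_nhds_iff.1 (hf.and hinv)
  let R := R₀.restrOpen S hSo
  have hmem : ∀ y ∈ R.source, y ∈ S := fun y hy => by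
    have : y ∈ R₀.source ∩ S := by simpa [R] using hy
    exact this.2
  have hd : ∀ y ∈ R.source, ∃ e : E ≃L[ℝ] F, HasFDerivAt f (e : E →L[ℝ] F) y := by
    intro y hy
    obtain ⟨h1, e, he⟩ := hS y (hmem y hy)
    exact ⟨e, he ▸ (h1.differentiableAt hne).hasFDerivAt⟩
  have hR : (R : E → F) = f := rfl
  refine ⟨R, fun y => rfl, ?_, fun y hy => (hS y (hmem y hy)).1, hd, ?_⟩
  · simp only [R, OpenPartialHomeomorph.restrOpen_source]; exact ⟨hsrc, haS⟩
  · intro z hz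
    have hz' := R.map_target hz
    obtain ⟨e, he⟩ := hd _ hz'
    exact R.contDiffAt_symm hz (hR ▸ he) (hR ▸ (hS _ (hmem _ hz')).1)

section Flow
variable {E : Type} [NormedAddCommGroup E] [NormedSpace ℝ E] [CompleteSpace E]

lemma intg (g : C(unitInterval, E)) : Continuous fun r : ℝ => g (projIcc 0 1 zero_le_one r) :=
  g.continuous.comp continuous_projIcc

/-- Primitive operator. -/
noncomputable def primOp (E : Type) [NormedAddCommGroup E] [NormedSpace ℝ E] [CompleteSpace E] :
    C(unitInterval, E) →L[ℝ] C(unitInterval, E) :=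
  LinearMap.mkContinuous
    { toFun := fun g => ⟨fun t => ∫ r in (0:ℝ)..t, g (projIcc 0 1 zero_le_one r), by
        have := (intervalIntegral.continuous_primitive
          (fun a b => (intg g).intervalIntegrable (μ := MeasureTheory.volume) a b) 0)
        exact this.comp continuous_subtype_val⟩
      map_add' := by
        intro g h
        ext t
        simp only [ContinuousMap.coe_mk, ContinuousMap.add_apply]
        exact intervalIntegral.integral_add ((intg g).intervalIntegrable _ _)
          ((intg h).intervalIntegrable _ _)
      map_smul' := by
        intro c g
        ext t
        simp } 1 (by
    intro g
    rw [one_mul, ContinuousMap.norm_le _ (by positivity)]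
    intro t
    have := intervalIntegral.norm_integral_le_of_norm_le_const (a := (0:ℝ)) (b := t)
      (f := fun r => g (projIcc 0 1 zero_le_one r)) (C := ‖g‖) (fun r _ => g.norm_coe_le_norm _)
    refine this.trans ?_
    rw [sub_zero, abs_of_nonneg t.2.1]
    exact mul_le_of_le_one_right (by positivity) t.2.2)

lemma primOp_apply (g : C(unitInterval, E)) (t : unitInterval) :
    primOp E g t = ∫ r in (0:ℝ)..t, g (projIcc 0 1 zero_le_one r) := rfl

lemma primOp_norm (g : C(unitInterval, E)) : ‖primOp E g‖ ≤ ‖g‖ := by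
  have := (primOp E).le_of_opNorm_le (LinearMap.mkContinuous_norm_le _ zero_le_one _) g
  simpa using this

lemma sol_unique (f : C(E, E)) (K : ℝ) (hK : ∀ x y, ‖f x - f y‖ ≤ K * ‖x - y‖) (s : ℝ)
    (hs : |s| * K < 1) (hK0 : 0 ≤ K) (a : C(unitInterval, E)) (γ₁ γ₂ : C(unitInterval, E))
    (h1 : γ₁ - s • primOp E (f.comp γ₁) = a) (h2 : γ₂ - s • primOp E (f.comp γ₂) = a) :
    γ₁ = γ₂ := by
  have e : γ₁ - γ₂ = s • primOp E (f.comp γ₁ - f.comp γ₂) := by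
    rw [map_sub, smul_sub, ← sub_eq_zero]
    rw [← h2, ← sub_eq_zero] at h1
    rw [← h1]; abel
  have e2 : ‖f.comp γ₁ - f.comp γ₂‖ ≤ K * ‖γ₁ - γ₂‖ := by
    rw [ContinuousMap.norm_le _ (by positivity)]
    intro t
    exact (hK _ _).trans (mul_le_mul_of_nonneg_left ((γ₁ - γ₂).norm_coe_le_norm t) hK0)
  have e3 : ‖γ₁ - γ₂‖ ≤ |s| * (K * ‖γ₁ - γ₂‖) := by
    conv_lhs => rw [e]
    rw [norm_smul, Real.norm_eq_abs]
    exact mul_le_mul_of_nonneg_left ((primOp_norm _).trans e2) (abs_nonneg s)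
  have : ‖γ₁ - γ₂‖ ≤ 0 := by
    by_contra! hp
    nlinarith
  exact sub_eq_zero.1 (norm_le_zero_iff.1 this)

lemma flow_exists (f : C(E, E)) (hf : ContDiff ℝ ∞ f) (K : ℝ) (hK0 : 0 ≤ K)
    (hK : ∀ x y, ‖f x - f y‖ ≤ K * ‖x - y‖) (x : E) :
    ∃ φ : ℝ × E → E, ∃ δ > 0, ∀ s a, |s| < δ → ‖a - x‖ < δ →
      ContDiffAt ℝ ∞ φ (s, a) ∧ φ (0, a) = a ∧
      HasDerivAt (fun s => φ (s, a)) (f (φ (s, a))) s := by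
  let I := unitInterval
  let J := primOp E
  let cst : E →L[ℝ] C(I, E) := ContinuousLinearMap.const ℝ I
  let Ψ : (ℝ × E) × C(I, E) → (ℝ × E) × C(I, E) :=
    fun q => (q.1, q.2 - q.1.1 • J (f.comp q.2))
  have hN : ContDiff ℝ ∞ (fun γ : C(I, E) => f.comp γ) := nem_contDiff f hf
  have hΨ : ContDiff ℝ ∞ Ψ := by
    have : ContDiff ℝ ∞ (fun q : (ℝ × E) × C(I, E) => f.comp q.2) := hN.comp contDiff_snd
    have := J.contDiff.comp this
    exact contDiff_fst.prodMk (contDiff_snd.sub (contDiff_fst.fst.smul this))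
  let z₀ : (ℝ × E) × C(I, E) := ((0, x), cst x)
  let A : (ℝ × E) →L[ℝ] C(I, E) := -((ContinuousLinearMap.fst ℝ ℝ E).smulRight (J (f.comp (cst x))))
  let L : ((ℝ × E) × C(I, E)) ≃L[ℝ] ((ℝ × E) × C(I, E)) :=
    (ContinuousLinearEquiv.refl ℝ (ℝ × E)).skewProd (ContinuousLinearEquiv.refl ℝ C(I, E)) A
  have hL : HasFDerivAt Ψ (L : _ →L[ℝ] _) z₀ := by
    have h1 : HasFDerivAt (fun q : (ℝ × E) × C(I, E) => f.comp q.2) _ z₀ :=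
      ((hN.comp contDiff_snd).differentiable (by simp) z₀).hasFDerivAt
    have h2 := J.hasFDerivAt.comp z₀ h1
    have h3 : HasFDerivAt (fun q : (ℝ × E) × C(I, E) => q.1.1) _ z₀ :=
      (hasFDerivAt_fst (𝕜 := ℝ) (p := z₀)).fst
    have h4 := (hasFDerivAt_fst (𝕜 := ℝ) (p := z₀)).prodMk
      ((hasFDerivAt_snd (𝕜 := ℝ) (p := z₀)).sub (h3.smul h2))
    refine h4.congr_fderiv ?_
    refine ContinuousLinearMap.ext fun q => ?_
    refine Prod.ext ?_ ?_
    · simp [L]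
    · simp [L, A, z₀, sub_eq_add_neg]
  obtain ⟨R, hR, hz₀, -, -, hRs⟩ := ift_smooth_s5 Ψ z₀ (Eventually.of_forall fun y => hΨ.contDiffAt) L hL
  have hΨz : Ψ z₀ = z₀ := by simp [Ψ, z₀]
  let ι : ℝ × E → (ℝ × E) × C(I, E) := fun p => (p, cst p.2)
  have hι : ContDiff ℝ ∞ ι := contDiff_id.prodMk (cst.contDiff.comp contDiff_snd)
  let g : ℝ × E → C(I, E) := fun p => (R.symm (ι p)).2
  have htar : ∀ᶠ p in 𝓝 ((0 : ℝ), x), ι p ∈ R.target := by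
    apply hι.continuous.continuousAt.eventually_mem
    apply R.open_target.mem_nhds
    have := R.map_source hz₀
    rw [hR, hΨz] at this
    exact this
  have hg : ∀ p, ι p ∈ R.target → ContDiffAt ℝ ∞ g p := fun p hp =>
    ((hRs _ hp).comp p hι.contDiffAt).snd
  have hsol : ∀ p, ι p ∈ R.target → g p - p.1 • J (f.comp (g p)) = cst p.2 := by
    intro p hp
    have h := R.right_inv hp
    rw [hR] at h
    have h1 : (R.symm (ι p)).1 = p := congrArg Prod.fst h
    have h2 := congrArg Prod.snd h
    simp only [Ψ, h1] at h2
    exact h2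
  obtain ⟨δ₀, hδ₀, hball⟩ := Metric.eventually_nhds_iff.1 htar
  let δ := min δ₀ (1 / (K + 1))
  have hδ : 0 < δ := lt_min hδ₀ (by positivity)
  have htar' : ∀ s a, |s| < δ → ‖a - x‖ < δ → ι (s, a) ∈ R.target := by
    intro s a hs ha
    apply hball
    rw [Prod.dist_eq, max_lt_iff]
    simp only [dist_zero_right, Real.norm_eq_abs, dist_eq_norm a x]
    exact ⟨hs.trans_le (min_le_left _ _), ha.trans_le (min_le_left _ _)⟩
  have hsK : ∀ s, |s| < δ → |s| * K < 1 := by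
    intro s hs
    have h1 : |s| < 1 / (K + 1) := hs.trans_le (min_le_right _ _)
    rw [lt_div_iff₀ (by positivity)] at h1
    nlinarith [abs_nonneg s]
  have happ : ∀ s a, |s| < δ → ‖a - x‖ < δ → ∀ t : I,
      g (s, a) t = a + s • ∫ r in (0:ℝ)..t, f (g (s, a) (projIcc 0 1 zero_le_one r)) := by
    intro s a hs ha t
    have h := hsol _ (htar' s a hs ha)
    have h := congrArg (fun c : C(I, E) => c t) h
    simp only [ContinuousMap.sub_apply, ContinuousMap.smul_apply] at h
    rw [sub_eq_iff_eq_add] at h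
    exact h
  -- reparametrisation
  have hrep : ∀ s a, |s| < δ → ‖a - x‖ < δ → ∀ τ : I, g (s * τ, a) 1 = g (s, a) τ := by
    intro s a hs ha τ
    have hsτ : |s * (τ : ℝ)| < δ := by
      rw [abs_mul, abs_of_nonneg τ.2.1]
      exact (mul_le_of_le_one_right (abs_nonneg s) τ.2.2).trans_lt hs
    let γ : C(I, E) := (g (s, a)).comp ⟨fun t : I => τ * t, by fun_prop⟩
    have hγ : γ - (s * (τ:ℝ)) • J (f.comp γ) = cst a := by
      ext t
      rw [ContinuousMap.sub_apply, ContinuousMap.smul_apply, sub_eq_iff_eq_add]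
      have h1 : γ t = _ := happ s a hs ha (τ * t)
      rw [h1]
      have h2 : ((s * (τ:ℝ)) • J (f.comp γ)) t = s • ∫ r in (0:ℝ)..(τ * t : I),
          f (g (s, a) (projIcc 0 1 zero_le_one r)) := by
        rw [ContinuousMap.smul_apply, mul_smul, primOp_apply]
        congr 1
        have h3 := intervalIntegral.smul_integral_comp_mul_left (a := 0) (b := (t:ℝ))
          (fun r => f (g (s, a) (projIcc 0 1 zero_le_one r))) (τ:ℝ)
        rw [mul_zero] at h3
        rw [Set.Icc.coe_mul, ← h3]
        congr 1
        apply intervalIntegral.integral_congr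
        intro r hr
        rw [uIcc_of_le t.2.1] at hr
        have hr' : r ∈ Icc (0:ℝ) 1 := ⟨hr.1, hr.2.trans t.2.2⟩
        have hr2 : (τ:ℝ) * r ∈ Icc (0:ℝ) 1 :=
          ⟨mul_nonneg τ.2.1 hr'.1, mul_le_one₀ τ.2.2 hr'.1 hr'.2⟩
        simp only [γ, ContinuousMap.comp_apply, ContinuousMap.coe_mk]
        rw [projIcc_of_mem _ hr', projIcc_of_mem _ hr2]
        rfl
      exact congrArg (a + ·) h2.symm
    have := sol_unique f K hK (s * τ) (hsK _ hsτ) hK0 (cst a) (g (s * τ, a)) γ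
      (hsol _ (htar' _ a hsτ ha)) hγ
    rw [this]
    simp [γ]
  have hφc : ∀ s a, |s| < δ → ‖a - x‖ < δ → ContDiffAt ℝ ∞ (fun p => g p 1) (s, a) := by
    intro s a hs ha
    exact (ContinuousMap.evalCLM ℝ (1 : I)).contDiff.contDiffAt.comp _ (hg _ (htar' s a hs ha))
  have hIntg : ∀ s a, |s| < δ → ‖a - x‖ < δ →
      g (s, a) 1 = a + ∫ r in (0:ℝ)..s, f (g (r, a) 1) := by
    intro s a hs ha
    rw [happ s a hs ha 1]
    congr 1
    have h3 := intervalIntegral.smul_integral_comp_mul_left (a := 0) (b := (1:ℝ))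
      (fun r => f (g (r, a) 1)) s
    rw [mul_zero, mul_one] at h3
    rw [← h3]
    congr 1
    apply intervalIntegral.integral_congr
    intro r hr
    have hr' : r ∈ Icc (0:ℝ) 1 := by simpa using hr
    have := hrep s a hs ha ⟨r, hr'⟩
    simp only
    rw [projIcc_of_mem _ hr', this]
  refine ⟨fun p => g p 1, δ, hδ, fun s a hs ha => ⟨hφc s a hs ha, ?_, ?_⟩⟩
  · have := hIntg 0 a (by simpa using hδ) ha
    simpa using this
  · have hev : (fun s => g (s, a) 1) =ᶠ[𝓝 s] fun s => a + ∫ r in (0:ℝ)..s, f (g (r, a) 1) := by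
      have : ∀ᶠ s' in 𝓝 s, |s'| < δ := continuous_abs.continuousAt.eventually_lt_const hs
      exact this.mono fun s' hs' => hIntg s' a hs' ha
    have hca : ∀ s', |s'| < δ → ContinuousAt (fun r => f (g (r, a) 1)) s' := by
      intro s' hs'
      have h1 : ContinuousAt (fun r : ℝ => (r, a)) s' := by fun_prop
      have h2 : ContinuousAt (fun p => g p 1) (s', a) := (hφc s' a hs' ha).continuousAt
      exact f.continuous.continuousAt.comp (h2.comp (f := fun r : ℝ => (r, a)) h1)
    refine HasDerivAt.congr_of_eventuallyEq ?_ hev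
    refine (intervalIntegral.integral_hasDerivAt_right ?_ ?_ (hca s hs)).const_add a
    · apply ContinuousOn.intervalIntegrable
      intro r hr
      refine (hca r ?_).continuousWithinAt
      have := abs_sub_left_of_mem_uIcc hr
      simp only [sub_zero] at this
      exact this.trans_lt hs
    · refine ContinuousOn.stronglyMeasurableAtFilter (s := {s' | |s'| < δ})
        (isOpen_lt continuous_abs continuous_const)
        (fun r hr => (hca r hr).continuousWithinAt) s hs
end Flow


lemma exists_cutoff {E : Type} [NormedAddCommGroup E] [NormedSpace ℝ E] [FiniteDimensional ℝ E]
    (X : E → E) (x : E) (hX : ∀ᶠ y in 𝓝 x, ContDiffAt ℝ ∞ X y) :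
    ∃ f : C(E, E), ContDiff ℝ ∞ f ∧ HasCompactSupport f ∧ (⇑f =ᶠ[𝓝 x] X) := by
  obtain ⟨r, hr, hb⟩ := Metric.eventually_nhds_iff_ball.1 hX
  let b : ContDiffBump x := ⟨r / 4, r / 2, by positivity, by linarith⟩
  have hsm : ContDiff ℝ ∞ (fun y => b y • X y) := by
    rw [contDiff_iff_contDiffAt]
    intro y
    by_cases hy : y ∈ Metric.ball x r
    · exact b.contDiff.contDiffAt.smul (hb y hy)
    · have hy' : y ∉ tsupport b := by
        rw [b.tsupport_eq]
        intro h
        apply hy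
        exact Metric.closedBall_subset_ball (by change r / 2 < r; linarith) h
      have h0 : (fun y => b y • X y) =ᶠ[𝓝 y] fun _ => 0 := by
        have := notMem_tsupport_iff_eventuallyEq.1 hy'
        filter_upwards [this] with z hz
        simp [hz]
      exact contDiffAt_const.congr_of_eventuallyEq h0
  refine ⟨⟨_, hsm.continuous⟩, hsm, b.hasCompactSupport.smul_right, ?_⟩
  filter_upwards [b.eventuallyEq_one] with y hy
  simp [hy]

lemma flow_box {E : Type} [NormedAddCommGroup E] [NormedSpace ℝ E] [FiniteDimensional ℝ E]
    (X : E → E) (x : E) (hX : ∀ᶠ y in 𝓝 x, ContDiffAt ℝ ∞ X y) (hx : X x ≠ 0) :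
    ∃ H : Submodule ℝ E, Module.finrank ℝ H + 1 = Module.finrank ℝ E ∧
    ∃ R : OpenPartialHomeomorph (H × ℝ) E, (0 : H × ℝ) ∈ R.source ∧ R 0 = x ∧
      (∀ p ∈ R.source, ContDiffAt ℝ ∞ R p) ∧ (∀ y ∈ R.target, ContDiffAt ℝ ∞ R.symm y) ∧
      (∀ᶠ p in 𝓝 (0 : H × ℝ), fderiv ℝ R p (0, 1) = X (R p)) ∧
      (∀ᶠ h in 𝓝 (0 : H), R (h, 0) = x + h) := by
  have : CompleteSpace E := FiniteDimensional.complete ℝ E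
  obtain ⟨f, hf, hfc, hfX⟩ := exists_cutoff X x hX
  obtain ⟨K, hK⟩ := hf.lipschitzWith_of_hasCompactSupport hfc (by simp)
  have hK' : ∀ a b, ‖f a - f b‖ ≤ K * ‖a - b‖ := fun a b => by
    simpa [dist_eq_norm] using hK.dist_le_mul a b
  obtain ⟨φ, δ, hδ, hφ⟩ := flow_exists f hf K K.2 hK' x
  obtain ⟨H, hH⟩ := Submodule.exists_isCompl (Submodule.span ℝ {X x})
  have hfr : Module.finrank ℝ H + 1 = Module.finrank ℝ E := by
    rw [← Submodule.finrank_add_eq_of_isCompl hH, finrank_span_singleton hx, add_comm]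
  refine ⟨H, hfr, ?_⟩
  let Φ : H × ℝ → E := fun p => φ (p.2, x + p.1)
  have hin : Continuous (fun p : H × ℝ => (p.2, x + (p.1 : E))) := by fun_prop
  have hsm : ∀ p : H × ℝ, |p.2| < δ → ‖(p.1 : E)‖ < δ → ContDiffAt ℝ ∞ Φ p := by
    intro p h1 h2
    have h3 : ContDiff ℝ ∞ (fun p : H × ℝ => (p.2, x + (p.1 : E))) :=
      contDiff_snd.prodMk (contDiff_const.add (H.subtypeL.contDiff.comp contDiff_fst))
    exact ((hφ p.2 (x + p.1) h1 (by simpa using h2)).1).comp p h3.contDiffAt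
  have hev : ∀ᶠ p in 𝓝 (0 : H × ℝ), |p.2| < δ ∧ ‖(p.1 : E)‖ < δ := by
    have h1 : ContinuousAt (fun p : H × ℝ => |p.2|) 0 := by fun_prop
    have h2 : ContinuousAt (fun p : H × ℝ => ‖(p.1 : E)‖) 0 := by fun_prop
    exact (h1.eventually_lt_const (by simpa using hδ)).and
      (h2.eventually_lt_const (by simpa using hδ))
  have hzero : ∀ h : H, ‖(h : E)‖ < δ → Φ (h, 0) = x + h := fun h hh =>
    (hφ 0 (x + h) (by simpa using hδ) (by simpa using hh)).2.1
  have hder : ∀ p : H × ℝ, |p.2| < δ → ‖(p.1 : E)‖ < δ → fderiv ℝ Φ p (0, 1) = f (Φ p) := by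
    intro p h1 h2
    have hd := ((hsm p h1 h2).differentiableAt (by simp)).hasFDerivAt
    have hline : HasDerivAt (fun s : ℝ => (p.1, s)) ((0 : H), (1 : ℝ)) p.2 :=
      (hasDerivAt_const _ _).prodMk (hasDerivAt_id _)
    have := hd.comp_hasDerivAt (f := fun s : ℝ => (p.1, s)) p.2 hline
    exact this.unique (hφ p.2 (x + p.1) h1 (by simpa using h2)).2.2
  have h0 : Φ 0 = x := (hzero 0 (by simpa using hδ)).trans (by simp)
  let e : (H × ℝ) ≃L[ℝ] E :=
    ((((LinearEquiv.refl ℝ H).prodCongr (LinearEquiv.toSpanNonzeroSingleton ℝ E (X x) hx)).trans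
      (Submodule.prodEquivOfIsCompl H _ hH.symm))).toContinuousLinearEquiv
  have he : ∀ h s, e (h, s) = h + s • X x := by
    intro h s
    simp [e]
  have h00 : |(0 : H × ℝ).2| < δ ∧ ‖((0 : H × ℝ).1 : E)‖ < δ := by simpa using hδ
  have hderiv : HasFDerivAt Φ (e : (H × ℝ) →L[ℝ] E) 0 := by
    have hd := ((hsm 0 h00.1 h00.2).differentiableAt (by simp)).hasFDerivAt
    refine hd.congr_fderiv ?_
    refine ContinuousLinearMap.ext fun ⟨h, s⟩ => ?_
    have e1 : fderiv ℝ Φ 0 (0, 1) = X x := by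
      rw [hder 0 h00.1 h00.2, h0]; exact hfX.self_of_nhds
    have e2 : fderiv ℝ Φ 0 (h, 0) = h := by
      have hl : HasFDerivAt (fun h : H => (h, (0 : ℝ))) (ContinuousLinearMap.inl ℝ H ℝ) 0 :=
        (ContinuousLinearMap.inl ℝ H ℝ).hasFDerivAt
      have h1 := HasFDerivAt.comp (f := fun h : H => (h, (0 : ℝ))) 0 hd hl
      have h2 : HasFDerivAt (Φ ∘ fun h : H => (h, (0 : ℝ))) H.subtypeL 0 := by
        refine (H.subtypeL.hasFDerivAt.const_add x).congr_of_eventuallyEq ?_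
        have : ContinuousAt (fun h : H => ‖(h : E)‖) 0 := by fun_prop
        filter_upwards [this.eventually_lt_const (u := δ) (by simpa using hδ)] with h hh
        exact hzero h hh
      have := congrArg (fun A : H →L[ℝ] E => A h) (h1.unique h2)
      simpa using this
    have e3 : ((h, s) : H × ℝ) = (h, 0) + s • (0, 1) := by simp
    change fderiv ℝ Φ 0 (h, s) = e (h, s)
    rw [he, e3, map_add, map_smul, e1, e2]
  obtain ⟨R, hR, hR0, hRs, -, hRt⟩ := ift_smooth_s5 Φ 0 (hev.mono fun p hp => hsm p hp.1 hp.2) e hderiv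
  have hRΦ : (R : H × ℝ → E) = Φ := funext hR
  refine ⟨R, hR0, by rw [hR, h0], ?_, hRt, ?_, ?_⟩
  · rw [hRΦ]; exact hRs
  · rw [hRΦ]
    have : ContinuousAt Φ 0 := hderiv.continuousAt
    have := this.eventually (by rw [h0]; exact hfX)
    filter_upwards [this, hev] with p hp hp2
    rw [hder p hp2.1 hp2.2, hp]
  · rw [hRΦ]
    have : ContinuousAt (fun h : H => ‖(h : E)‖) 0 := by fun_prop
    filter_upwards [this.eventually_lt_const (u := δ) (by simpa using hδ)] with h hh
    exact hzero h hh


section Forms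
variable {E F : Type} [NormedAddCommGroup E] [NormedSpace ℝ E]
  [NormedAddCommGroup F] [NormedSpace ℝ F]

/-- Closedness at a point of a (curried) 2-form. -/
def ClosedAt (Ω : E → E →L[ℝ] E →L[ℝ] ℝ) (y : E) : Prop :=
  ∀ a b c, fderiv ℝ Ω y a b c - fderiv ℝ Ω y b a c + fderiv ℝ Ω y c a b = 0

/-- Pullback of a (curried) 2-form. -/
noncomputable def pull (f : E → F) (Ω : F → F →L[ℝ] F →L[ℝ] ℝ) (y : E) : E →L[ℝ] E →L[ℝ] ℝ :=
  (((Ω (f y)).comp (fderiv ℝ f y)).flip.comp (fderiv ℝ f y)).flip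

@[simp] lemma pull_apply (f : E → F) (Ω : F → F →L[ℝ] F →L[ℝ] ℝ) (y v w : E) :
    pull f Ω y v w = Ω (f y) (fderiv ℝ f y v) (fderiv ℝ f y w) := rfl

lemma contDiff_flip (E F : Type) [NormedAddCommGroup E] [NormedSpace ℝ E]
    [NormedAddCommGroup F] [NormedSpace ℝ F] :
    ContDiff ℝ ∞ (fun B : E →L[ℝ] F →L[ℝ] ℝ => B.flip) := by
  apply IsBoundedLinearMap.contDiff (𝕜 := ℝ)
  refine ⟨⟨fun A B => rfl, fun c A => rfl⟩, 1, one_pos, fun B => ?_⟩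
  rw [one_mul, ContinuousLinearMap.opNorm_flip]

lemma pull_contDiffAt {f : E → F} {Ω : F → F →L[ℝ] F →L[ℝ] ℝ} {y : E}
    (hf : ContDiffAt ℝ ∞ f y) (hΩ : ContDiffAt ℝ ∞ Ω (f y)) :
    ContDiffAt ℝ ∞ (pull f Ω) y := by
  have h1 : ContDiffAt ℝ ∞ (fderiv ℝ f) y := hf.fderiv_right (by simp)
  have h2 : ContDiffAt ℝ ∞ (fun y => (Ω (f y)).comp (fderiv ℝ f y)) y :=
    (hΩ.comp y hf).clm_comp h1
  have h3 : ContDiffAt ℝ ∞ (fun y => ((Ω (f y)).comp (fderiv ℝ f y)).flip) y :=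
    (contDiff_flip E F).contDiffAt.comp y h2
  have h4 := h3.clm_comp h1
  exact (contDiff_flip E E).contDiffAt.comp y h4

lemma fderiv_bil_apply {Ω : E → F →L[ℝ] F →L[ℝ] ℝ} {y : E} (h : DifferentiableAt ℝ Ω y)
    (a : E) (b c : F) : fderiv ℝ Ω y a b c = fderiv ℝ (fun y => Ω y b c) y a := by
  have h1 := (h.hasFDerivAt.clm_apply (hasFDerivAt_const b y)).clm_apply (hasFDerivAt_const c y)
  rw [h1.fderiv]
  simp

lemma fderiv_pull {f : E → F} {Ω : F → F →L[ℝ] F →L[ℝ] ℝ} {y : E}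
    (hf : ContDiffAt ℝ ∞ f y) (hΩ : ContDiffAt ℝ ∞ Ω (f y)) (a b c : E) :
    fderiv ℝ (pull f Ω) y a b c =
      fderiv ℝ Ω (f y) (fderiv ℝ f y a) (fderiv ℝ f y b) (fderiv ℝ f y c)
      + Ω (f y) (fderiv ℝ (fderiv ℝ f) y a b) (fderiv ℝ f y c)
      + Ω (f y) (fderiv ℝ f y b) (fderiv ℝ (fderiv ℝ f) y a c) := by
  rw [fderiv_bil_apply ((pull_contDiffAt hf hΩ).differentiableAt (by simp))]
  have h0 := (hf.differentiableAt (by simp)).hasFDerivAt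
  have h1 : HasFDerivAt (fderiv ℝ f) _ y :=
    ((hf.fderiv_right (m := ∞) (by simp)).differentiableAt (by simp)).hasFDerivAt
  have h2 := (hΩ.differentiableAt (by simp)).hasFDerivAt.comp y h0
  have h3 := (h2.clm_apply (h1.clm_apply (hasFDerivAt_const b y))).clm_apply
    (h1.clm_apply (hasFDerivAt_const c y))
  have h4 : HasFDerivAt (fun y => pull f Ω y b c) _ y := h3
  rw [h4.fderiv]
  simp
  ring

lemma symm2 {f : E → F} {y : E} (hf : ContDiffAt ℝ ∞ f y) (a b : E) :
    fderiv ℝ (fderiv ℝ f) y a b = fderiv ℝ (fderiv ℝ f) y b a :=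
  (hf.isSymmSndFDerivAt (by
    rw [minSmoothness_of_isRCLikeNormedField]
    change ((2 : ℕ∞) : WithTop ℕ∞) ≤ ((⊤ : ℕ∞) : WithTop ℕ∞)
    exact WithTop.coe_le_coe.2 le_top)).eq a b

lemma antisymm_of_alt {B : E →L[ℝ] E →L[ℝ] ℝ} (h : ∀ v, B v v = 0) (v w : E) :
    B v w = - B w v := by
  have := h (v + w)
  simp [h v, h w] at this
  linarith

lemma closed_pull {f : E → F} {Ω : F → F →L[ℝ] F →L[ℝ] ℝ} {y : E}
    (hf : ContDiffAt ℝ ∞ f y) (hΩ : ContDiffAt ℝ ∞ Ω (f y)) (hc : ClosedAt Ω (f y))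
    (halt : ∀ v, Ω (f y) v v = 0) : ClosedAt (pull f Ω) y := by
  intro a b c
  simp only [fderiv_pull hf hΩ]
  have := hc (fderiv ℝ f y a) (fderiv ℝ f y b) (fderiv ℝ f y c)
  rw [symm2 hf b a, symm2 hf c a, symm2 hf c b,
    antisymm_of_alt halt (fderiv ℝ (fderiv ℝ f) y a c) (fderiv ℝ f y b)]
  linarith

/-- Wedge of covectors. -/
noncomputable def wedge (α β : E →L[ℝ] ℝ) : E →L[ℝ] E →L[ℝ] ℝ := α.smulRight β - β.smulRight α

@[simp] lemma wedge_apply (α β : E →L[ℝ] ℝ) (v w : E) :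
    wedge α β v w = α v * β w - β v * α w := by
  simp [wedge]

lemma wedge_contDiffAt {q : E → ℝ} {l : E →L[ℝ] ℝ} {y : E} (hq : ContDiffAt ℝ ∞ q y) :
    ContDiffAt ℝ ∞ (fun y => wedge (fderiv ℝ q y) l) y := by
  have h1 : ContDiffAt ℝ ∞ (fderiv ℝ q) y := hq.fderiv_right (by simp)
  have hc : ContDiffAt ℝ ∞ (fun _ : E => l) y := contDiffAt_const
  exact (h1.smulRight hc).sub (hc.smulRight h1)

lemma wedge_closed {q : E → ℝ} {l : E →L[ℝ] ℝ} {y : E} (hq : ContDiffAt ℝ ∞ q y) :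
    ClosedAt (fun y => wedge (fderiv ℝ q y) l) y := by
  have key : ∀ a b c, fderiv ℝ (fun y => wedge (fderiv ℝ q y) l) y a b c
      = fderiv ℝ (fderiv ℝ q) y a b * l c - l b * fderiv ℝ (fderiv ℝ q) y a c := by
    intro a b c
    rw [fderiv_bil_apply ((wedge_contDiffAt hq).differentiableAt (by simp))]
    have h1 : HasFDerivAt (fderiv ℝ q) _ y :=
      ((hq.fderiv_right (m := ∞) (by simp)).differentiableAt (by simp)).hasFDerivAt
    have hb := h1.clm_apply (hasFDerivAt_const b y)
    have hc := h1.clm_apply (hasFDerivAt_const c y)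
    have h := (hb.mul_const (l c)).sub (hc.const_mul (l b))
    have h' : HasFDerivAt (fun y => wedge (fderiv ℝ q y) l b c) _ y :=
      h.congr_of_eventuallyEq (Eventually.of_forall fun z => by simp)
    rw [h'.fderiv]
    simp
    ring
  intro a b c
  rw [key, key, key, symm2 hq b a, symm2 hq c a, symm2 hq c b]
  ring

/-- Rank of a bilinear form. -/
noncomputable def bilRank (B : E →L[ℝ] E →L[ℝ] ℝ) : ℕ :=
  Module.finrank ℝ (LinearMap.range (B : E →ₗ[ℝ] (E →L[ℝ] ℝ)))

lemma bilRank_le [FiniteDimensional ℝ E] [FiniteDimensional ℝ F] (B : F →L[ℝ] F →L[ℝ] ℝ)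
    (B' : E →L[ℝ] E →L[ℝ] ℝ) (A : E →L[ℝ] F) (h : ∀ v w, B' v w = B (A v) (A w)) :
    bilRank B' ≤ bilRank B := by
  let T : (F →L[ℝ] ℝ) →ₗ[ℝ] (E →L[ℝ] ℝ) :=
    { toFun := fun l => l.comp A
      map_add' := by intros; ext; simp
      map_smul' := by intros; ext; simp }
  have hle : LinearMap.range (B' : E →ₗ[ℝ] (E →L[ℝ] ℝ)) ≤
      (LinearMap.range (B : F →ₗ[ℝ] (F →L[ℝ] ℝ))).map T := by
    rintro _ ⟨v, rfl⟩
    refine ⟨B (A v), ⟨A v, rfl⟩, ?_⟩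
    ext w
    simp [T, h]
  exact (Submodule.finrank_mono hle).trans (Submodule.finrank_map_le _ _)

lemma finrank_dualL [FiniteDimensional ℝ E] :
    Module.finrank ℝ (E →L[ℝ] ℝ) = Module.finrank ℝ E := by
  rw [← (LinearMap.toContinuousLinearMap (𝕜 := ℝ) (E := E) (F' := ℝ)).finrank_eq]
  exact Subspace.dual_finrank_eq

lemma bilRank_add_ker [FiniteDimensional ℝ E] (B : E →L[ℝ] E →L[ℝ] ℝ) :
    bilRank B + Module.finrank ℝ (LinearMap.ker (B : E →ₗ[ℝ] (E →L[ℝ] ℝ)))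
      = Module.finrank ℝ E :=
  LinearMap.finrank_range_add_finrank_ker _

/-- An injective bilinear form is an isomorphism to the dual. -/
lemma exists_equiv_of_inj [FiniteDimensional ℝ E] (B : E →L[ℝ] E →L[ℝ] ℝ)
    (h : ∀ v, B v = 0 → v = 0) : ∃ e : E ≃L[ℝ] (E →L[ℝ] ℝ), (e : E →L[ℝ] (E →L[ℝ] ℝ)) = B := by
  have hinj : Function.Injective (B : E →ₗ[ℝ] (E →L[ℝ] ℝ)) :=
    (injective_iff_map_eq_zero _).2 h
  refine ⟨(LinearEquiv.ofInjectiveOfFinrankEq (B : E →ₗ[ℝ] (E →L[ℝ] ℝ)) hinj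
    finrank_dualL.symm).toContinuousLinearEquiv, ?_⟩
  ext v w
  rfl

lemma rank_drop [FiniteDimensional ℝ E] (B : E →L[ℝ] E →L[ℝ] ℝ) (m : ℕ)
    (hm : Module.finrank ℝ E = 2 * (m + 1)) (halt : ∀ v, B v v = 0) (hr : bilRank B = 2 * (m + 1))
    (X : E) (l α : E →L[ℝ] ℝ) (hX : B X = l) (hα : α X = 1) :
    bilRank (B - wedge α l) = 2 * m := by
  have hk := bilRank_add_ker B
  have hker : LinearMap.ker (B : E →ₗ[ℝ] (E →L[ℝ] ℝ)) = ⊥ := by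
    rw [← Submodule.finrank_eq_zero (R := ℝ)]; omega
  have hinj : ∀ v, B v = 0 → v = 0 := fun v hv => by
    have : v ∈ LinearMap.ker (B : E →ₗ[ℝ] (E →L[ℝ] ℝ)) := hv
    simpa [hker] using this
  obtain ⟨e, he⟩ := exists_equiv_of_inj B hinj
  obtain ⟨Y, hY⟩ : ∃ Y, B Y = α := ⟨e.symm α, by rw [← he]; simp⟩
  have lX : l X = 0 := by rw [← hX]; exact halt X
  have αY : α Y = 0 := by rw [← hY]; exact halt Y
  have lY : l Y = -1 := by rw [← hX, antisymm_of_alt halt, hY, hα]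
  have hker' : LinearMap.ker ((B - wedge α l : E →L[ℝ] E →L[ℝ] ℝ) : E →ₗ[ℝ] (E →L[ℝ] ℝ))
      = Submodule.span ℝ (range ![X, Y]) := by
    apply le_antisymm
    · intro v hv
      have hv' : (B - wedge α l) v = 0 := hv
      have hv2 : B (v - α v • X + l v • Y) = 0 := by
        ext w
        have := congrArg (fun A : E →L[ℝ] ℝ => A w) hv'
        simp at this
        simp [hX, hY]
        linarith
      have := hinj _ hv2
      have hv3 : v = α v • X - l v • Y := by
        rw [← sub_eq_zero, ← this]; abel
      rw [hv3]
      refine Submodule.sub_mem _ (Submodule.smul_mem _ _ (Submodule.subset_span ⟨0, rfl⟩))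
        (Submodule.smul_mem _ _ (Submodule.subset_span ⟨1, rfl⟩))
    · rw [Submodule.span_le]
      rintro _ ⟨i, rfl⟩
      fin_cases i
      · change (B - wedge α l) X = 0
        ext w; simp [hX, hα, lX]
      · change (B - wedge α l) Y = 0
        ext w; simp [hY, αY, lY]
  have hli : LinearIndependent ℝ ![X, Y] := by
    rw [LinearIndependent.pair_iff]
    intro s t hst
    have h1 := congrArg α hst
    have h2 := congrArg l hst
    simp [hα, αY, lX, lY] at h1 h2
    exact ⟨h1, h2⟩
  have h2 : Module.finrank ℝ (Submodule.span ℝ (range ![X, Y])) = 2 := by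
    rw [finrank_span_eq_card hli]; simp
  have := bilRank_add_ker (B - wedge α l)
  rw [hker', h2] at this
  omega

lemma inverse_smooth {V W : Type} [NormedAddCommGroup V] [NormedSpace ℝ V] [CompleteSpace V]
    [NormedAddCommGroup W] [NormedSpace ℝ W] (A : E → V →L[ℝ] W) (x : E)
    (hA : ∀ᶠ y in 𝓝 x, ContDiffAt ℝ ∞ A y) (e : V ≃L[ℝ] W) (he : (e : V →L[ℝ] W) = A x) :
    ∀ᶠ y in 𝓝 x, (∃ e' : V ≃L[ℝ] W, (e' : V →L[ℝ] W) = A y) ∧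
      ContDiffAt ℝ ∞ (fun y => (A y).inverse) y := by
  have hinv : ∀ᶠ y in 𝓝 x, ∃ e : V ≃L[ℝ] W, (e : V →L[ℝ] W) = A y := by
    have : range ((↑) : (V ≃L[ℝ] W) → V →L[ℝ] W) ∈ 𝓝 (A x) := by
      rw [← he]; exact ContinuousLinearEquiv.nhds e
    exact hA.self_of_nhds.continuousAt this
  filter_upwards [hinv, hA] with y hy hAy
  refine ⟨hy, ?_⟩
  obtain ⟨e', he'⟩ := hy
  exact ContDiffAt.comp y (he' ▸ contDiffAt_map_inverse e') hAy

end Forms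


lemma const_of_deriv_zero {G : Type} [NormedAddCommGroup G] [NormedSpace ℝ G] (g : ℝ → G) (r : ℝ)
    (h : ∀ s ∈ Metric.ball (0:ℝ) r, HasDerivWithinAt g 0 (Metric.ball (0:ℝ) r) s)
    (s : ℝ) (hs : |s| < r) : g s = g 0 := by
  have := (convex_ball (0:ℝ) r).norm_image_sub_le_of_norm_hasDerivWithin_le (f' := fun _ => (0 : G))
    (C := 0) h (fun _ _ => by simp) (Metric.mem_ball_self ((abs_nonneg s).trans_lt hs))
    (by simpa using hs : s ∈ Metric.ball (0:ℝ) r)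
  rw [zero_mul, norm_le_zero_iff, sub_eq_zero] at this
  exact this

section Darboux
variable {E : Type} [NormedAddCommGroup E] [NormedSpace ℝ E] [FiniteDimensional ℝ E]

/-- Closed 2-form of constant rank near a point. -/
structure GoodForm (Ω : E → E →L[ℝ] E →L[ℝ] ℝ) (x : E) (m : ℕ) : Prop where
  smooth : ∀ᶠ y in 𝓝 x, ContDiffAt ℝ ∞ Ω y
  alt : ∀ᶠ y in 𝓝 x, ∀ v, Ω y v v = 0
  closed : ∀ᶠ y in 𝓝 x, ClosedAt Ω y
  rank : ∀ᶠ y in 𝓝 x, bilRank (Ω y) = 2 * m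

/-- Darboux normal form near a point. -/
def DarbouxForm (Ω : E → E →L[ℝ] E →L[ℝ] ℝ) (x : E) (m : ℕ) : Prop :=
  ∃ f g : Fin m → E → ℝ, (∀ i, ∀ᶠ y in 𝓝 x, ContDiffAt ℝ ∞ (f i) y) ∧
    (∀ i, ∀ᶠ y in 𝓝 x, ContDiffAt ℝ ∞ (g i) y) ∧
    ∀ᶠ y in 𝓝 x, ∀ v w, Ω y v w =
      ∑ i, wedge (fderiv ℝ (f i) y) (fderiv ℝ (g i) y) v w

lemma symm_fderiv {F : Type} [NormedAddCommGroup F] [NormedSpace ℝ F]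
    (R : OpenPartialHomeomorph F E) (p : F) (hp : p ∈ R.source)
    (h1 : ContDiffAt ℝ ∞ R p) (h2 : ContDiffAt ℝ ∞ R.symm (R p)) :
    (∀ v, fderiv ℝ R.symm (R p) (fderiv ℝ R p v) = v) ∧
    (∀ v, fderiv ℝ R p (fderiv ℝ R.symm (R p) v) = v) := by
  have d1 := (h1.differentiableAt (by simp)).hasFDerivAt
  have d2 := (h2.differentiableAt (by simp)).hasFDerivAt
  constructor
  · intro v
    have h3 := d2.comp p d1
    have h4 : HasFDerivAt (R.symm ∘ R) (ContinuousLinearMap.id ℝ F) p := by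
      refine (hasFDerivAt_id p).congr_of_eventuallyEq ?_
      filter_upwards [R.open_source.mem_nhds hp] with z hz
      exact R.left_inv hz
    exact congrArg (fun A : F →L[ℝ] F => A v) (h3.unique h4)
  · intro v
    have d1' : HasFDerivAt R (fderiv ℝ R p) (R.symm (R p)) := by rw [R.left_inv hp]; exact d1
    have h3 := d1'.comp (R p) d2
    have h4 : HasFDerivAt (R ∘ R.symm) (ContinuousLinearMap.id ℝ E) (R p) := by
      refine (hasFDerivAt_id _).congr_of_eventuallyEq ?_
      filter_upwards [R.open_target.mem_nhds (R.map_source hp)] with z hz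
      exact R.right_inv hz
    exact congrArg (fun A : E →L[ℝ] E => A v) (h3.unique h4)

set_option maxHeartbeats 1000000 in
lemma reduce (Ω : E → E →L[ℝ] E →L[ℝ] ℝ) (x : E) (m : ℕ) (hΩ : GoodForm Ω x m)
    (X : E → E) (hX : ∀ᶠ y in 𝓝 x, ContDiffAt ℝ ∞ X y) (hx : X x ≠ 0)
    (hker : ∀ᶠ y in 𝓝 x, Ω y (X y) = 0) :
    ∃ H : Submodule ℝ E, Module.finrank ℝ H + 1 = Module.finrank ℝ E ∧
    ∃ Ω' : H → H →L[ℝ] H →L[ℝ] ℝ, GoodForm Ω' 0 m ∧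
    ∃ π : E → H, (∀ᶠ y in 𝓝 x, ContDiffAt ℝ ∞ π y) ∧ π x = 0 ∧
      ∀ᶠ y in 𝓝 x, ∀ v w, Ω y v w = Ω' (π y) (fderiv ℝ π y v) (fderiv ℝ π y w) := by
  obtain ⟨H, hfr, R, hR0, hRx, hRs, hRt, hRX, hRσ⟩ := flow_box X x hX hx
  refine ⟨H, hfr, ?_⟩
  let σ : H → E := fun h => x + h
  have hσ : ContDiff ℝ ∞ σ := contDiff_const.add H.subtypeL.contDiff
  have hσ0 : σ 0 = x := by simp [σ]
  have hσd : ∀ h v, fderiv ℝ σ h v = v := by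
    intro h v
    have : HasFDerivAt σ H.subtypeL h := H.subtypeL.hasFDerivAt.const_add x
    rw [this.fderiv]; rfl
  have hσt : Tendsto σ (𝓝 0) (𝓝 x) := by
    have := hσ.continuous.tendsto 0
    rwa [hσ0] at this
  have hRtend : Tendsto R (𝓝 0) (𝓝 x) := by
    have := (R.continuousAt hR0).tendsto
    rwa [hRx] at this
  have hxt : x ∈ R.target := hRx ▸ R.map_source hR0
  have hsx : R.symm x = 0 := by rw [← hRx]; exact R.left_inv hR0
  have hStend : Tendsto R.symm (𝓝 x) (𝓝 0) := by
    have := (R.continuousAt_symm hxt).tendsto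
    rwa [hsx] at this
  have hsrc : ∀ᶠ p in 𝓝 (0 : H × ℝ), p ∈ R.source := R.open_source.mem_nhds hR0
  have htgt : ∀ᶠ y in 𝓝 x, y ∈ R.target := R.open_target.mem_nhds hxt
  let θ := pull R Ω
  -- facts about θ near 0
  have hθs : ∀ᶠ p in 𝓝 (0 : H × ℝ), ContDiffAt ℝ ∞ θ p := by
    filter_upwards [hsrc, hRtend.eventually hΩ.smooth] with p hp h2
    exact pull_contDiffAt (hRs p hp) h2
  have hθa : ∀ᶠ p in 𝓝 (0 : H × ℝ), ∀ v, θ p v v = 0 := by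
    filter_upwards [hRtend.eventually hΩ.alt] with p h2 v
    exact h2 _
  have hθc : ∀ᶠ p in 𝓝 (0 : H × ℝ), ClosedAt θ p := by
    filter_upwards [hsrc, hRtend.eventually hΩ.smooth, hRtend.eventually hΩ.closed,
      hRtend.eventually hΩ.alt] with p hp h1 h2 h3
    exact closed_pull (hRs p hp) h1 h2 h3
  have hθk : ∀ᶠ p in 𝓝 (0 : H × ℝ), ∀ v, θ p (0, 1) v = 0 := by
    filter_upwards [hRX, hRtend.eventually hker] with p h1 h2 v
    simp only [θ, pull_apply]
    rw [h1, h2]; rfl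
  have hθd : ∀ᶠ p in 𝓝 (0 : H × ℝ), fderiv ℝ θ p (0, 1) = 0 := by
    filter_upwards [hθs, hθc, hθk.eventually_nhds] with p h1 h2 h3
    have hz : ∀ a b, fderiv ℝ θ p a (0, 1) b = 0 := by
      intro a b
      rw [fderiv_bil_apply (h1.differentiableAt (by simp))]
      have : (fun y => θ y (0, 1) b) =ᶠ[𝓝 p] fun _ => 0 := h3.mono fun y hy => hy b
      rw [this.fderiv_eq]; simp
    refine ContinuousLinearMap.ext fun b => ContinuousLinearMap.ext fun c => ?_
    have := h2 (0, 1) b c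
    rw [hz, hz] at this
    simpa using this
  have hθconst : ∀ᶠ p in 𝓝 (0 : H × ℝ), θ p = θ (p.1, 0) := by
    obtain ⟨r, hr, hb⟩ := Metric.eventually_nhds_iff_ball.1 (hθs.and hθd)
    filter_upwards [Metric.ball_mem_nhds (0 : H × ℝ) hr] with p hp
    have hp' : ‖p.1‖ < r ∧ |p.2| < r := by
      rw [mem_ball_zero_iff, Prod.norm_def, max_lt_iff] at hp
      exact hp
    have hder : ∀ s ∈ Metric.ball (0:ℝ) r,
        HasDerivWithinAt (fun s => θ (p.1, s)) 0 (Metric.ball (0:ℝ) r) s := by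
      intro s hs
      have hs' : (p.1, s) ∈ Metric.ball (0 : H × ℝ) r := by
        rw [mem_ball_zero_iff, Prod.norm_def, max_lt_iff]
        exact ⟨hp'.1, by simpa using hs⟩
      obtain ⟨h1, h2⟩ := hb _ hs'
      have hline : HasDerivAt (fun s : ℝ => (p.1, s)) ((0 : H), (1 : ℝ)) s :=
        (hasDerivAt_const _ _).prodMk (hasDerivAt_id _)
      have := ((h1.differentiableAt (by simp)).hasFDerivAt).comp_hasDerivAt
        (f := fun s : ℝ => (p.1, s)) s hline
      rw [h2] at this
      exact this.hasDerivWithinAt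
    exact const_of_deriv_zero (fun s => θ (p.1, s)) r hder p.2 hp'.2
  let Ω' := pull σ Ω
  have hfst : Tendsto (fun p : H × ℝ => p.1) (𝓝 0) (𝓝 0) := continuous_fst.tendsto (0 : H × ℝ)
  have hinl : Tendsto (fun h : H => (h, (0:ℝ))) (𝓝 0) (𝓝 0) :=
    (Continuous.prodMk_left (0:ℝ)).tendsto (0 : H)
  have hθ0 : ∀ᶠ h in 𝓝 (0 : H), ∀ v w, θ (h, 0) v w = Ω' h v.1 w.1 := by
    filter_upwards [hinl.eventually hsrc, hinl.eventually hθk, hinl.eventually hθa,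
      hRσ.eventually_nhds] with h h1 h2 h3 h4 v w
    have hRd : ∀ u : H, fderiv ℝ R (h, 0) (u, 0) = u := by
      intro u
      have hd := ((hRs _ h1).differentiableAt (by simp)).hasFDerivAt
      have hl : HasFDerivAt (fun h : H => (h, (0 : ℝ))) (ContinuousLinearMap.inl ℝ H ℝ) h :=
        (ContinuousLinearMap.inl ℝ H ℝ).hasFDerivAt
      have e1 := HasFDerivAt.comp (f := fun h : H => (h, (0 : ℝ))) h hd hl
      have e2 : HasFDerivAt (R ∘ fun h : H => (h, (0 : ℝ))) H.subtypeL h :=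
        (H.subtypeL.hasFDerivAt.const_add x).congr_of_eventuallyEq h4
      have := congrArg (fun A : H →L[ℝ] E => A u) (e1.unique e2)
      simpa using this
    have hv : ∀ v : H × ℝ, v = (v.1, 0) + v.2 • (0, 1) := fun v => by ext <;> simp
    have e1 : θ (h, 0) v w = θ (h, 0) (v.1, 0) (w.1, 0) := by
      conv_lhs => rw [hv v, hv w]
      simp only [map_add, map_smul, add_apply, smul_apply,
        h2, antisymm_of_alt h3 _ ((0, 1) : H × ℝ)]
      simp
    rw [e1]
    simp only [θ, Ω', pull_apply, hRd, hσd, h4.self_of_nhds, σ]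
  have hθall : ∀ᶠ p in 𝓝 (0 : H × ℝ), ∀ v w, θ p v w = Ω' p.1 v.1 w.1 := by
    filter_upwards [hθconst, hfst.eventually hθ0] with p h1 h2 v w
    rw [h1, h2]
  let π : E → H := fun y => (R.symm y).1
  have hπ : ∀ᶠ y in 𝓝 x, ContDiffAt ℝ ∞ π y := htgt.mono fun y hy => (hRt y hy).fst
  have hmain : ∀ᶠ y in 𝓝 x, ∀ v w, Ω y v w = Ω' (π y) (fderiv ℝ π y v) (fderiv ℝ π y w) := by
    filter_upwards [htgt, hStend.eventually hθall] with y hy h1 v w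
    have hs := R.map_target hy
    have hRy : R (R.symm y) = y := R.right_inv hy
    have hinv := (symm_fderiv R (R.symm y) hs (hRs _ hs) (by rw [hRy]; exact hRt y hy)).2
    rw [hRy] at hinv
    have hπd : ∀ v, fderiv ℝ π y v = (fderiv ℝ R.symm y v).1 := by
      intro v
      have := (((hRt y hy).differentiableAt (by simp)).hasFDerivAt).fst
      have h' : HasFDerivAt π _ y := this
      rw [h'.fderiv]; rfl
    rw [hπd, hπd, ← h1]
    simp only [θ, pull_apply, hinv, hRy]
  refine ⟨Ω', ⟨?_, ?_, ?_, ?_⟩, π, hπ, by simp [π, hsx], hmain⟩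
  · filter_upwards [hσt.eventually hΩ.smooth] with h h1
    exact pull_contDiffAt hσ.contDiffAt h1
  · filter_upwards [hσt.eventually hΩ.alt] with h h1 v
    exact h1 _
  · filter_upwards [hσt.eventually hΩ.smooth, hσt.eventually hΩ.closed,
      hσt.eventually hΩ.alt] with h h1 h2 h3
    exact closed_pull hσ.contDiffAt h1 h2 h3
  · filter_upwards [hσt.eventually hΩ.rank, hσt.eventually hmain, hRσ, hinl.eventually hsrc]
      with h h1 h2 h3 h4
    have hπσ : π (σ h) = h := by
      change (R.symm (x + h)).1 = h
      rw [← h3, R.left_inv h4]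
    rw [hπσ] at h2
    rw [← h1]
    apply le_antisymm
    · exact bilRank_le (Ω (σ h)) (Ω' h) (fderiv ℝ σ h) (fun v w => rfl)
    · exact bilRank_le (Ω' h) (Ω (σ h)) (fderiv ℝ π (σ h)) h2
end Darboux


section Darboux2
variable {E : Type} [NormedAddCommGroup E] [NormedSpace ℝ E] [FiniteDimensional ℝ E]

/-- Pullback of a bilinear form along a linear map. -/
noncomputable def restrL {V : Type} [NormedAddCommGroup V] [NormedSpace ℝ V] (ι : V →L[ℝ] E)
    (B : E →L[ℝ] E →L[ℝ] ℝ) : V →L[ℝ] V →L[ℝ] ℝ :=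
  ((B.comp ι).flip.comp ι).flip

lemma restrL_contDiffAt {V : Type} [NormedAddCommGroup V] [NormedSpace ℝ V] (ι : V →L[ℝ] E)
    {Ω : E → E →L[ℝ] E →L[ℝ] ℝ} {y : E}
    (h : ContDiffAt ℝ ∞ Ω y) : ContDiffAt ℝ ∞ (fun y => restrL ι (Ω y)) y := by
  have h2 : ContDiffAt ℝ ∞ (fun y => (Ω y).comp ι) y := h.clm_comp contDiffAt_const
  have h3 : ContDiffAt ℝ ∞ (fun y => ((Ω y).comp ι).flip) y :=
    (contDiff_flip V E).contDiffAt.comp y h2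
  have h4 : ContDiffAt ℝ ∞ (fun y => ((Ω y).comp ι).flip.comp ι) y :=
    h3.clm_comp contDiffAt_const
  exact (contDiff_flip V V).contDiffAt.comp y h4

/-- Restriction of a bilinear form to a subspace. -/
noncomputable def restr (C : Submodule ℝ E) (B : E →L[ℝ] E →L[ℝ] ℝ) : C →L[ℝ] C →L[ℝ] ℝ :=
  restrL C.subtypeL B

lemma restr_apply (C : Submodule ℝ E) (B : E →L[ℝ] E →L[ℝ] ℝ) (v w : C) :
    restr C B v w = B v w := rfl

lemma vanish_of_sup {B : E →L[ℝ] E →L[ℝ] ℝ} (halt : ∀ v, B v v = 0) (C : Submodule ℝ E)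
    (hsup : LinearMap.ker (B : E →ₗ[ℝ] (E →L[ℝ] ℝ)) ⊔ C = ⊤) (v : E)
    (hv : ∀ c : C, B v c = 0) : B v = 0 := by
  ext w
  have hw : w ∈ LinearMap.ker (B : E →ₗ[ℝ] (E →L[ℝ] ℝ)) ⊔ C := by rw [hsup]; trivial
  obtain ⟨k, hk, c, hc, rfl⟩ := Submodule.mem_sup.1 hw
  have hk' : B k = 0 := hk
  rw [map_add, hv ⟨c, hc⟩, antisymm_of_alt halt v k, hk']
  simp

lemma kernel_section (Ω : E → E →L[ℝ] E →L[ℝ] ℝ) (x : E) (m : ℕ) (hΩ : GoodForm Ω x m)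
    (hdim : 2 * m < Module.finrank ℝ E) :
    ∃ X : E → E, (∀ᶠ y in 𝓝 x, ContDiffAt ℝ ∞ X y) ∧ X x ≠ 0 ∧ ∀ᶠ y in 𝓝 x, Ω y (X y) = 0 := by
  have hrk := bilRank_add_ker (Ω x)
  have hrx := hΩ.rank.self_of_nhds
  have hax := hΩ.alt.self_of_nhds
  obtain ⟨v0, hv0, hv0'⟩ : ∃ v ∈ LinearMap.ker (Ω x : E →ₗ[ℝ] (E →L[ℝ] ℝ)), v ≠ 0 := by
    apply Submodule.exists_mem_ne_zero_of_ne_bot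
    intro h
    rw [h, finrank_bot] at hrk
    omega
  have hv0x : Ω x v0 = 0 := hv0
  obtain ⟨C, hC⟩ := Submodule.exists_isCompl (LinearMap.ker (Ω x : E →ₗ[ℝ] (E →L[ℝ] ℝ)))
  have hCdim := Submodule.finrank_add_eq_of_isCompl hC
  obtain ⟨e, he⟩ := exists_equiv_of_inj (restr C (Ω x)) (by
    intro c hc
    have h1 : Ω x c = 0 := vanish_of_sup hax C hC.sup_eq_top c fun c' => by
      rw [← restr_apply, hc]; rfl
    have h2 : (c : E) ∈ LinearMap.ker (Ω x : E →ₗ[ℝ] (E →L[ℝ] ℝ)) := h1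
    exact Subtype.ext (Submodule.disjoint_def.1 hC.disjoint _ h2 c.2))
  have hinv := inverse_smooth (fun y => restr C (Ω y)) x
    (hΩ.smooth.mono fun y hy => restrL_contDiffAt C.subtypeL hy) e he
  let X : E → E := fun y =>
    v0 - C.subtypeL ((restr C (Ω y)).inverse ((Ω y v0).comp C.subtypeL))
  refine ⟨X, ?_, ?_, ?_⟩
  · filter_upwards [hinv, hΩ.smooth] with y h1 h2
    have h3 : ContDiffAt ℝ ∞ (fun y => (Ω y v0).comp C.subtypeL) y :=
      (h2.clm_apply contDiffAt_const).clm_comp contDiffAt_const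
    exact contDiffAt_const.sub
      (C.subtypeL.contDiff.contDiffAt.comp y (h1.2.clm_apply h3))
  · have : X x = v0 := by simp [X, hv0x]
    rwa [this]
  · filter_upwards [hinv, hΩ.alt, hΩ.rank] with y h1 h2 h3
    obtain ⟨⟨e', he'⟩, -⟩ := h1
    apply vanish_of_sup h2 C
    · have hk := bilRank_add_ker (Ω y)
      apply Submodule.eq_top_of_disjoint
      · omega
      · rw [Submodule.disjoint_def]
        intro c hc hcC
        have hc' : Ω y c = 0 := hc
        have : e' ⟨c, hcC⟩ = 0 := by
          change (e' : C →L[ℝ] C →L[ℝ] ℝ) ⟨c, hcC⟩ = 0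
          rw [he']
          ext w
          rw [restr_apply]
          simp [hc']
        have := (map_eq_zero_iff e' e'.injective).1 this
        exact congrArg Subtype.val this
    · intro c
      have h4 : restr C (Ω y) ((restr C (Ω y)).inverse ((Ω y v0).comp C.subtypeL))
          = (Ω y v0).comp C.subtypeL := by
        rw [← he', ContinuousLinearMap.inverse_equiv]; simp
      have h5 := congrArg (fun A : C →L[ℝ] ℝ => A c) h4
      simp only [restr_apply] at h5
      simp only [X, map_sub, sub_apply, sub_eq_zero]
      exact h5.symm

lemma nondeg_step (Ω : E → E →L[ℝ] E →L[ℝ] ℝ) (x : E) (m : ℕ) (hΩ : GoodForm Ω x (m + 1))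
    (hdim : Module.finrank ℝ E = 2 * (m + 1)) :
    ∃ (q : E → ℝ) (l : E →L[ℝ] ℝ), (∀ᶠ y in 𝓝 x, ContDiffAt ℝ ∞ q y) ∧
      GoodForm (fun y => Ω y - wedge (fderiv ℝ q y) l) x m := by
  have hrk := bilRank_add_ker (Ω x)
  have hrx := hΩ.rank.self_of_nhds
  obtain ⟨e, he⟩ := exists_equiv_of_inj (Ω x) (by
    intro v hv
    have h1 : LinearMap.ker (Ω x : E →ₗ[ℝ] (E →L[ℝ] ℝ)) = ⊥ := by
      rw [← Submodule.finrank_eq_zero (R := ℝ)]; omega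
    have h2 : v ∈ LinearMap.ker (Ω x : E →ₗ[ℝ] (E →L[ℝ] ℝ)) := hv
    simpa [h1] using h2)
  have : CompleteSpace E := FiniteDimensional.complete ℝ E
  have hinv := inverse_smooth Ω x hΩ.smooth e he
  have : Nontrivial E := Module.nontrivial_of_finrank_pos (R := ℝ) (by omega)
  obtain ⟨v0, hv0⟩ := exists_ne (0 : E)
  let l : E →L[ℝ] ℝ := e v0
  let X : E → E := fun y => (Ω y).inverse l
  have hXs : ∀ᶠ y in 𝓝 x, ContDiffAt ℝ ∞ X y :=
    hinv.mono fun y hy => hy.2.clm_apply contDiffAt_const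
  have hXl : ∀ᶠ y in 𝓝 x, Ω y (X y) = l := by
    filter_upwards [hinv] with y hy
    obtain ⟨⟨e', he'⟩, -⟩ := hy
    simp only [X]
    rw [← he', ContinuousLinearMap.inverse_equiv]; simp
  have hXx : X x ≠ 0 := by
    intro h
    have h2 := hXl.self_of_nhds
    rw [h, map_zero] at h2
    exact hv0 ((map_eq_zero_iff e e.injective).1 h2.symm)
  obtain ⟨H, hfr, R, hR0, hRx, hRs, hRt, hRX, hRσ⟩ := flow_box X x hXs hXx
  have hxt : x ∈ R.target := hRx ▸ R.map_source hR0
  have hsx : R.symm x = 0 := by rw [← hRx]; exact R.left_inv hR0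
  have hStend : Tendsto R.symm (𝓝 x) (𝓝 0) := by
    have := (R.continuousAt_symm hxt).tendsto
    rwa [hsx] at this
  have htgt : ∀ᶠ y in 𝓝 x, y ∈ R.target := R.open_target.mem_nhds hxt
  let q : E → ℝ := fun y => (R.symm y).2
  have hq : ∀ᶠ y in 𝓝 x, ContDiffAt ℝ ∞ q y := htgt.mono fun y hy => (hRt y hy).snd
  have hqX : ∀ᶠ y in 𝓝 x, fderiv ℝ q y (X y) = 1 := by
    filter_upwards [htgt, hStend.eventually hRX] with y hy h1
    have hs := R.map_target hy
    have hRy : R (R.symm y) = y := R.right_inv hy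
    have hinv := (symm_fderiv R (R.symm y) hs (hRs _ hs) (by rw [hRy]; exact hRt y hy)).1 (0, 1)
    rw [hRy] at hinv h1
    rw [h1] at hinv
    have := (((hRt y hy).differentiableAt (by simp)).hasFDerivAt).snd
    have h' : HasFDerivAt q _ y := this
    rw [h'.fderiv]
    simp [hinv]
  refine ⟨q, l, hq, ⟨?_, ?_, ?_, ?_⟩⟩
  · filter_upwards [hΩ.smooth, hq] with y h1 h2
    exact h1.sub (wedge_contDiffAt h2)
  · filter_upwards [hΩ.alt] with y h1 v
    simp [h1 v]; ring
  · filter_upwards [hΩ.smooth, hq, hΩ.closed] with y h1 h2 h3 a b c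
    have hd : fderiv ℝ (fun y => Ω y - wedge (fderiv ℝ q y) l) y = _ :=
      fderiv_fun_sub (h1.differentiableAt (by simp))
        ((wedge_contDiffAt (l := l) h2).differentiableAt (by simp))
    rw [hd]
    have e1 := h3 a b c
    have e2 := wedge_closed (l := l) h2 a b c
    change (fderiv ℝ Ω y a b c - fderiv ℝ (fun y => wedge (fderiv ℝ q y) l) y a b c)
      - (fderiv ℝ Ω y b a c - fderiv ℝ (fun y => wedge (fderiv ℝ q y) l) y b a c)
      + (fderiv ℝ Ω y c a b - fderiv ℝ (fun y => wedge (fderiv ℝ q y) l) y c a b) = 0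
    linarith
  · filter_upwards [hΩ.rank, hΩ.alt, hXl, hqX] with y h1 h2 h3 h4
    exact rank_drop (Ω y) m hdim h2 h1 (X y) l _ h3 h4

end Darboux2

lemma darboux_aux (m : ℕ) : ∀ (n : ℕ) (E : Type) [NormedAddCommGroup E] [NormedSpace ℝ E]
    [FiniteDimensional ℝ E] (Ω : E → E →L[ℝ] E →L[ℝ] ℝ) (x : E),
    Module.finrank ℝ E = n → GoodForm Ω x m → DarbouxForm Ω x m := by
  induction m with
  | zero =>
    intro n E _ _ _ Ω x hn hΩ
    refine ⟨fun i => i.elim0, fun i => i.elim0, fun i => i.elim0, fun i => i.elim0, ?_⟩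
    filter_upwards [hΩ.rank] with y hy v w
    have h1 : LinearMap.range (Ω y : E →ₗ[ℝ] (E →L[ℝ] ℝ)) = ⊥ := by
      rw [← Submodule.finrank_eq_zero (R := ℝ)]; exact hy
    have h2 : Ω y v ∈ LinearMap.range (Ω y : E →ₗ[ℝ] (E →L[ℝ] ℝ)) := ⟨v, rfl⟩
    rw [h1, Submodule.mem_bot] at h2
    simp [h2]
  | succ m ihm =>
    intro n
    induction n with
    | zero =>
      intro E _ _ _ Ω x hn hΩ
      exfalso
      have := bilRank_add_ker (Ω x)
      have := hΩ.rank.self_of_nhds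
      omega
    | succ n ihn =>
      intro E _ _ _ Ω x hn hΩ
      by_cases hdim : Module.finrank ℝ E = 2 * (m + 1)
      · obtain ⟨q, l, hq, hG⟩ := nondeg_step Ω x m hΩ hdim
        obtain ⟨f, g, hf, hg, h⟩ := ihm (n + 1) E _ x hn hG
        refine ⟨Fin.cons q f, Fin.cons l g, ?_, ?_, ?_⟩
        · intro i
          refine Fin.cases ?_ (fun j => ?_) i
          · simpa using hq
          · simpa using hf j
        · intro i
          refine Fin.cases ?_ (fun j => ?_) i
          · exact Eventually.of_forall fun y => l.contDiff.contDiffAt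
          · simpa using hg j
        · filter_upwards [h] with y hy v w
          have := hy v w
          rw [Fin.sum_univ_succ]
          simp only [Fin.cons_zero, Fin.cons_succ, ContinuousLinearMap.fderiv]
          rw [← this]
          simp
      · have hlt : 2 * (m + 1) < Module.finrank ℝ E := by
          have := bilRank_add_ker (Ω x)
          have := hΩ.rank.self_of_nhds
          omega
        obtain ⟨X, hX, hXx, hker⟩ := kernel_section Ω x (m + 1) hΩ hlt
        obtain ⟨H, hfr, Ω', hG, π, hπ, hπx, hmain⟩ := reduce Ω x (m + 1) hΩ X hX hXx hker
        obtain ⟨f, g, hf, hg, h⟩ := ihn H Ω' 0 (by omega) hG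
        have hπt : Tendsto π (𝓝 x) (𝓝 0) := by
          have := hπ.self_of_nhds.continuousAt.tendsto
          rwa [hπx] at this
        refine ⟨fun i => f i ∘ π, fun i => g i ∘ π, ?_, ?_, ?_⟩
        · intro i
          filter_upwards [hπ, hπt.eventually (hf i)] with y h1 h2
          exact h2.comp y h1
        · intro i
          filter_upwards [hπ, hπt.eventually (hg i)] with y h1 h2
          exact h2.comp y h1
        · filter_upwards [hπ, hmain, hπt.eventually h, hπt.eventually (eventually_all.2 hf),
            hπt.eventually (eventually_all.2 hg)] with y h1 h2 h3 h4 h5 v w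
          rw [h2, h3]
          refine Finset.sum_congr rfl fun i _ => ?_
          have hd := (h1.differentiableAt (by simp))
          rw [fderiv_comp y ((h4 i).differentiableAt (by simp)) hd,
            fderiv_comp y ((h5 i).differentiableAt (by simp)) hd]
          simp


/-- Currying of bilinear maps. -/
noncomputable def curE (E : Type) [NormedAddCommGroup E] [NormedSpace ℝ E] :
    (E [×2]→L[ℝ] ℝ) ≃L[ℝ] (E →L[ℝ] E →L[ℝ] ℝ) :=
  (continuousMultilinearCurryLeftEquiv ℝ (fun _ : Fin 2 => E) ℝ).toContinuousLinearEquiv.trans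
    (ContinuousLinearEquiv.arrowCongr (ContinuousLinearEquiv.refl ℝ E)
      (continuousMultilinearCurryFin1 ℝ E ℝ).toContinuousLinearEquiv)

lemma curE_apply (E : Type) [NormedAddCommGroup E] [NormedSpace ℝ E] (A : E [×2]→L[ℝ] ℝ)
    (v w : E) : curE E A v w = A ![v, w] := by
  have : (![v, w] : Fin 2 → E) = Fin.cons v (Fin.snoc 0 w) := by
    ext i; fin_cases i <;> simp
  rw [this]
  rfl

lemma curE_symm_apply (E : Type) [NormedAddCommGroup E] [NormedSpace ℝ E]
    (B : E →L[ℝ] E →L[ℝ] ℝ) (v : Fin 2 → E) : (curE E).symm B v = B (v 0) (v 1) := by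
  have h := curE_apply E ((curE E).symm B) (v 0) (v 1)
  rw [ContinuousLinearEquiv.apply_symm_apply] at h
  rw [h]
  congr 1
  ext i; fin_cases i <;> simp

lemma curE_apply' (E : Type) [NormedAddCommGroup E] [NormedSpace ℝ E] (A : E [×2]→L[ℝ] ℝ)
    (v : Fin 2 → E) : A v = curE E A (v 0) (v 1) := by
  rw [← curE_symm_apply, ContinuousLinearEquiv.symm_apply_apply]

lemma fderiv_equiv_comp {E X Y : Type} [NormedAddCommGroup E] [NormedSpace ℝ E]
    [NormedAddCommGroup X] [NormedSpace ℝ X] [NormedAddCommGroup Y] [NormedSpace ℝ Y]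
    (e : X ≃L[ℝ] Y) (A : E → X) (y a : E) :
    fderiv ℝ (fun y => e (A y)) y a = e (fderiv ℝ A y a) := by
  have h := e.comp_fderiv (f := A) (x := y)
  exact congrArg (fun L : E →L[ℝ] Y => L a) h

lemma equiv_comp_contDiffAt {E X Y : Type} [NormedAddCommGroup E] [NormedSpace ℝ E]
    [NormedAddCommGroup X] [NormedSpace ℝ X] [NormedAddCommGroup Y] [NormedSpace ℝ Y]
    (e : X ≃L[ℝ] Y) (A : E → X) (y : E) (h : ContDiffAt ℝ ∞ A y) :
    ContDiffAt ℝ ∞ (fun y => e (A y)) y :=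
  e.contDiff.contDiffAt.comp y h

lemma fderiv_cur {E : Type} [NormedAddCommGroup E] [NormedSpace ℝ E]
    (A : E → E [×2]→L[ℝ] ℝ) (y a b c : E) :
    fderiv ℝ (fun y => curE E (A y)) y a b c = fderiv ℝ A y a ![b, c] := by
  rw [← curE_apply]
  have h := fderiv_equiv_comp (X := E [×2]→L[ℝ] ℝ) (Y := E →L[ℝ] E →L[ℝ] ℝ) (curE E) A y a
  exact congrArg (fun B : E →L[ℝ] E →L[ℝ] ℝ => B b c) h

lemma closed_iff {E : Type} [NormedAddCommGroup E] [NormedSpace ℝ E]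
    (A : E → E [×2]→L[ℝ] ℝ) (y : E) :
    (∀ v : Fin 3 → E, ∑ i : Fin 3,
      (-1 : ℝ) ^ (i : ℕ) * fderiv ℝ A y (v i) (fun j => v (i.succAbove j)) = 0) ↔
    ClosedAt (fun y => curE E (A y)) y := by
  have key : ∀ v : Fin 3 → E, ∑ i : Fin 3,
      (-1 : ℝ) ^ (i : ℕ) * fderiv ℝ A y (v i) (fun j => v (i.succAbove j)) =
      fderiv ℝ A y (v 0) ![v 1, v 2] - fderiv ℝ A y (v 1) ![v 0, v 2]
        + fderiv ℝ A y (v 2) ![v 0, v 1] := by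
    intro v
    have e0 : (fun j => v ((0 : Fin 3).succAbove j)) = ![v 1, v 2] := by
      ext j; fin_cases j <;> rfl
    have e1 : (fun j => v ((1 : Fin 3).succAbove j)) = ![v 0, v 2] := by
      ext j; fin_cases j <;> rfl
    have e2 : (fun j => v ((2 : Fin 3).succAbove j)) = ![v 0, v 1] := by
      ext j; fin_cases j <;> rfl
    rw [Fin.sum_univ_three, e0, e1, e2]
    simp
    ring
  constructor
  · intro h a b c
    have := h ![a, b, c]
    rw [key] at this
    simp only [fderiv_cur]
    exact this
  · intro h v
    rw [key]
    have := h (v 0) (v 1) (v 2)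
    simpa only [fderiv_cur] using this

lemma normal_form {E : Type} [NormedAddCommGroup E] [NormedSpace ℝ E] [FiniteDimensional ℝ E]
    (Ω : E → E →L[ℝ] E →L[ℝ] ℝ) (x : E) (m : ℕ) (hG : GoodForm Ω x m) :
    ∃ R : OpenPartialHomeomorph E E, x ∈ R.source ∧ (∀ y ∈ R.source, ContDiffAt ℝ ∞ R y) ∧
      (∀ y ∈ R.source, Function.Bijective (fderiv ℝ R y)) ∧
      ∃ B : E →L[ℝ] E →L[ℝ] ℝ, ∀ᶠ y in 𝓝 x, ∀ v w,
        Ω y v w = B (fderiv ℝ R y v) (fderiv ℝ R y w) := by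
  have : CompleteSpace E := FiniteDimensional.complete ℝ E
  obtain ⟨f, g, hf, hg, h⟩ := darboux_aux m _ E Ω x rfl hG
  let T := (Fin m → ℝ) × (Fin m → ℝ)
  let F : E → T := fun y => (fun i => f i y, fun i => g i y)
  have hFs : ∀ᶠ y in 𝓝 x, ContDiffAt ℝ ∞ F y := by
    filter_upwards [eventually_all.2 hf, eventually_all.2 hg] with y h1 h2
    exact (contDiffAt_pi.2 h1).prodMk (contDiffAt_pi.2 h2)
  have hFd : ∀ᶠ y in 𝓝 x, ∀ v, fderiv ℝ F y v =
      (fun i => fderiv ℝ (f i) y v, fun i => fderiv ℝ (g i) y v) := by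
    filter_upwards [eventually_all.2 hf, eventually_all.2 hg] with y h1 h2 v
    have h3 := (hasFDerivAt_pi.2 fun i => ((h1 i).differentiableAt (by simp)).hasFDerivAt).prodMk
      (hasFDerivAt_pi.2 fun i => ((h2 i).differentiableAt (by simp)).hasFDerivAt)
    have h4 : HasFDerivAt F _ y := h3
    rw [h4.fderiv]
    rfl
  let A : E →L[ℝ] T := fderiv ℝ F x
  let K := LinearMap.ker (A : E →ₗ[ℝ] T)
  have hKle : K ≤ LinearMap.ker (Ω x : E →ₗ[ℝ] (E →L[ℝ] ℝ)) := by
    intro v hv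
    have hv' : fderiv ℝ F x v = 0 := hv
    rw [hFd.self_of_nhds v] at hv'
    have hv1 : ∀ i, fderiv ℝ (f i) x v = 0 := fun i => congrFun (congrArg Prod.fst hv') i
    have hv2 : ∀ i, fderiv ℝ (g i) x v = 0 := fun i => congrFun (congrArg Prod.snd hv') i
    change Ω x v = 0
    ext w
    rw [h.self_of_nhds v w]
    simp [hv1, hv2]
  have hTdim : Module.finrank ℝ T = 2 * m := by simp [T]; ring
  have hle := Submodule.finrank_mono hKle
  have hrk := bilRank_add_ker (Ω x)
  have hrx := hG.rank.self_of_nhds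
  have hrn := LinearMap.finrank_range_add_finrank_ker (A : E →ₗ[ℝ] T)
  have hr2 := Submodule.finrank_le (LinearMap.range (A : E →ₗ[ℝ] T))
  have hKdim : Module.finrank ℝ K + 2 * m = Module.finrank ℝ E := by
    change Module.finrank ℝ (LinearMap.range (A : E →ₗ[ℝ] T)) + Module.finrank ℝ K = _ at hrn
    omega
  obtain ⟨P, hP⟩ := Submodule.ClosedComplemented.of_finiteDimensional K
  let e : (T × K) ≃L[ℝ] E := ContinuousLinearEquiv.ofFinrankEq (by
    rw [Module.finrank_prod, hTdim]; omega)
  let u : E → E := fun y => e (F y, P y)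
  have hud : ∀ᶠ y in 𝓝 x, HasFDerivAt u
      ((e : (T × K) →L[ℝ] E).comp ((fderiv ℝ F y).prod P)) y := by
    filter_upwards [hFs] with y hy
    exact (e : (T × K) →L[ℝ] E).hasFDerivAt.comp y
      ((hy.differentiableAt (by simp)).hasFDerivAt.prodMk P.hasFDerivAt)
  have hus : ∀ᶠ y in 𝓝 x, ContDiffAt ℝ ∞ u y := by
    filter_upwards [hFs] with y hy
    exact (e : (T × K) →L[ℝ] E).contDiff.contDiffAt.comp y (hy.prodMk P.contDiff.contDiffAt)
  obtain ⟨f', hf'⟩ : ∃ f' : E ≃L[ℝ] E, (f' : E →L[ℝ] E) =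
      (e : (T × K) →L[ℝ] E).comp ((fderiv ℝ F x).prod P) := by
    have hinj : Function.Injective ((e : (T × K) →L[ℝ] E).comp ((fderiv ℝ F x).prod P)) := by
      rw [injective_iff_map_eq_zero]
      intro v hv
      have h1 : ((fderiv ℝ F x v, P v) : T × K) = 0 := (map_eq_zero_iff e e.injective).1 hv
      have h2 : v ∈ K := congrArg Prod.fst h1
      have h3 : P v = 0 := congrArg Prod.snd h1
      have h4 := hP ⟨v, h2⟩
      rw [h3] at h4
      exact (congrArg Subtype.val h4).symm
    refine ⟨(LinearEquiv.ofInjectiveEndo _ hinj).toContinuousLinearEquiv, ?_⟩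
    ext v
    rfl
  obtain ⟨R, hR, hRx, hRs, hRd, -⟩ := ift_smooth_s5 u x hus f' (hf' ▸ hud.self_of_nhds)
  have hRu : (R : E → E) = u := funext hR
  refine ⟨R, hRx, ?_, ?_, ?_⟩
  · rw [hRu]; exact hRs
  · rw [hRu]
    intro y hy
    obtain ⟨e', he'⟩ := hRd y hy
    rw [he'.fderiv]
    exact e'.bijective
  · let p1 : Fin m → E →L[ℝ] ℝ := fun i => (ContinuousLinearMap.proj i).comp
      ((ContinuousLinearMap.fst ℝ _ _).comp ((ContinuousLinearMap.fst ℝ T K).comp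
        (e.symm : E →L[ℝ] (T × K))))
    let p2 : Fin m → E →L[ℝ] ℝ := fun i => (ContinuousLinearMap.proj i).comp
      ((ContinuousLinearMap.snd ℝ _ _).comp ((ContinuousLinearMap.fst ℝ T K).comp
        (e.symm : E →L[ℝ] (T × K))))
    refine ⟨∑ i, wedge (p1 i) (p2 i), ?_⟩
    rw [hRu]
    filter_upwards [h, hud, hFd] with y h1 h2 h3 v w
    rw [h1, h2.fderiv]
    have q1 : ∀ i v, p1 i (((e : (T × K) →L[ℝ] E).comp ((fderiv ℝ F y).prod P)) v)
        = fderiv ℝ (f i) y v := by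
      intro i v
      have : p1 i (e (fderiv ℝ F y v, P v)) = (fderiv ℝ F y v).1 i := by simp [p1]
      exact this.trans (by rw [h3])
    have q2 : ∀ i v, p2 i (((e : (T × K) →L[ℝ] E).comp ((fderiv ℝ F y).prod P)) v)
        = fderiv ℝ (g i) y v := by
      intro i v
      have : p2 i (e (fderiv ℝ F y v, P v)) = (fderiv ℝ F y v).2 i := by simp [p2]
      exact this.trans (by rw [h3])
    simp only [sum_apply, wedge_apply, q1, q2]



lemma darboux_if (n m : ℕ)
    (U : Set (Fin n → ℝ)) (hU : IsOpen U)
    (A : (Fin n → ℝ) → ((Fin n → ℝ) [×2]→L[ℝ] ℝ))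
    (hA : ContDiffOn ℝ ∞ A U)
    (hskew : ∀ y ∈ U, ∀ v : Fin 2 → (Fin n → ℝ), ∀ i j, i ≠ j → v i = v j → A y v = 0)
    (hrank : ∀ y ∈ U, Module.finrank ℝ (bilinKernel n (A y)) + 2 * m = n)
    (x : Fin n → ℝ) (hx : x ∈ U)
    (hcl : ∃ W : Set (Fin n → ℝ), IsOpen W ∧ x ∈ W ∧
      ∀ y ∈ W, ClosedAt (fun y => curE (Fin n → ℝ) (A y)) y) :
    HasConstantCoefficientsFormAt n 2 U A x := by
  obtain ⟨W, hW, hxW, hcl⟩ := hcl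
  have hUx : ∀ᶠ y in 𝓝 x, y ∈ U := hU.mem_nhds hx
  have hG : GoodForm (fun y => curE (Fin n → ℝ) (A y)) x m := by
    refine ⟨?_, ?_, ?_, ?_⟩
    · filter_upwards [hUx] with y hy
      exact equiv_comp_contDiffAt (X := (Fin n → ℝ) [×2]→L[ℝ] ℝ)
        (Y := (Fin n → ℝ) →L[ℝ] (Fin n → ℝ) →L[ℝ] ℝ) (curE (Fin n → ℝ)) A y
        (hA.contDiffAt (hU.mem_nhds hy))
    · filter_upwards [hUx] with y hy v
      rw [curE_apply]
      exact hskew y hy _ 0 1 (by simp) (by simp)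
    · filter_upwards [hW.mem_nhds hxW] with y hy
      exact hcl y hy
    · filter_upwards [hUx] with y hy
      have h1 := bilRank_add_ker (curE (Fin n → ℝ) (A y))
      have h2 : LinearMap.ker (curE (Fin n → ℝ) (A y) :
          (Fin n → ℝ) →ₗ[ℝ] ((Fin n → ℝ) →L[ℝ] ℝ)) = bilinKernel n (A y) := by
        ext v
        constructor
        · intro hv z
          have hv' : curE (Fin n → ℝ) (A y) v = 0 := hv
          rw [← curE_apply, hv']; rfl
        · intro hv
          change curE (Fin n → ℝ) (A y) v = 0
          apply ContinuousLinearMap.ext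
          intro z
          rw [curE_apply]
          exact hv z
      have h3 := hrank y hy
      rw [h2, Module.finrank_fin_fun] at h1
      omega
  obtain ⟨R, hRx, hRs, hRb, B, hB⟩ := normal_form _ x m hG
  obtain ⟨N, hN, hNo, hxN⟩ := eventually_nhds_iff.1 hB
  refine ⟨R.source ∩ (U ∩ N), R.open_source.inter (hU.inter hNo), ⟨hRx, hx, hxN⟩,
    fun y hy => hy.2.1, R, fun y hy => (hRs y hy.1).contDiffWithinAt,
    R.injOn.mono inter_subset_left, ?_, fun y hy => hRb y hy.1, (curE _).symm B, ?_⟩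
  · exact R.isOpen_image_of_subset_source (R.open_source.inter (hU.inter hNo)) inter_subset_left
  · intro y hy v
    rw [curE_symm_apply, curE_apply', hN y hy.2.2]

lemma darboux_only_if (n : ℕ)
    (U : Set (Fin n → ℝ)) 
    (A : (Fin n → ℝ) → ((Fin n → ℝ) [×2]→L[ℝ] ℝ))
    (hskew : ∀ y ∈ U, ∀ v : Fin 2 → (Fin n → ℝ), ∀ i j, i ≠ j → v i = v j → A y v = 0)
    (x : Fin n → ℝ) (h : HasConstantCoefficientsFormAt n 2 U A x) :
    ∃ W : Set (Fin n → ℝ), IsOpen W ∧ x ∈ W ∧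
      ∀ y ∈ W, ClosedAt (fun y => curE (Fin n → ℝ) (A y)) y := by
  obtain ⟨V, hV, hxV, hVU, u, hu, -, -, hb, c, hc⟩ := h
  refine ⟨V, hV, hxV, fun y hy => ?_⟩
  have heq : (fun y => curE (Fin n → ℝ) (A y)) =ᶠ[𝓝 y] pull u (fun _ => curE (Fin n → ℝ) c) := by
    filter_upwards [hV.mem_nhds hy] with z hz
    apply ContinuousLinearMap.ext
    intro v
    apply ContinuousLinearMap.ext
    intro w
    rw [pull_apply, curE_apply, curE_apply, hc z hz]
    congr 1
    ext i; fin_cases i <;> rfl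
  have hcl : ClosedAt (pull u (fun _ => curE (Fin n → ℝ) c)) y := by
    apply closed_pull (hu.contDiffAt (hV.mem_nhds hy)) contDiffAt_const
    · intro a b c
      simp
    · intro v
      obtain ⟨w, rfl⟩ := (hb y hy).2 v
      have h1 := heq.self_of_nhds
      have h2 : curE (Fin n → ℝ) (A y) w w = 0 := by
        rw [curE_apply]
        exact hskew y (hVU hy) _ 0 1 (by simp) (by simp)
      have h3 : curE (Fin n → ℝ) (A y) = _ := h1
      rw [h3, pull_apply] at h2
      exact h2
  intro a b c
  rw [heq.fderiv_eq]
  exact hcl a b c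

end DarbouxProof

/-- a smooth `2`-form on `U ⊆ ℝⁿ` whose skew-symmetric bilinear form has
constant rank `2m` on all of `U` has constant coefficients on a neighbourhood of
`x ∈ U` if and only if `dω = 0` on a neighbourhood of `x` (Darboux's theorem). -/
theorem twoForm_constantRank_constantCoefficients_iff_closed (n m : ℕ)
    (U : Set (Fin n → ℝ)) (hU : IsOpen U)
    (ω : (Fin n → ℝ) → ((Fin n → ℝ) [×2]→L[ℝ] ℝ))
    (hω : ContDiffOn ℝ (⊤ : ℕ∞) ω U)
    (hskew : ∀ y ∈ U, ∀ v : Fin 2 → (Fin n → ℝ), ∀ i j, i ≠ j → v i = v j → ω y v = 0)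
    (hrank : ∀ y ∈ U, Module.finrank ℝ (bilinKernel n (ω y)) + 2 * m = n)
    (x : Fin n → ℝ) (hx : x ∈ U) :
    HasConstantCoefficientsFormAt n 2 U ω x ↔
      ∃ W : Set (Fin n → ℝ), IsOpen W ∧ x ∈ W ∧
        ∀ y ∈ W, ∀ v : Fin 3 → (Fin n → ℝ),
          ∑ i : Fin 3,
            (-1 : ℝ) ^ (i : ℕ) * fderiv ℝ ω y (v i) (fun j => v (i.succAbove j)) = 0 := by
  constructor
  · intro h
    obtain ⟨W, hW, hxW, hcl⟩ := darboux_only_if n U ω hskew x h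
    exact ⟨W, hW, hxW, fun y hy => (closed_iff ω y).2 (hcl y hy)⟩
  · rintro ⟨W, hW, hxW, hcl⟩
    exact darboux_if n m U hU ω hω hskew hrank x hx
      ⟨W, hW, hxW, fun y hy => (closed_iff ω y).1 (hcl y hy)⟩
end
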